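/- (Chen–Lin logarithmic moment bound on growing balls.) Under the blow-up setup, there exist a sequence l_i → +∞ with l_i ≤ δ_i/(2 r_i) and a constant C' independent of i such that ∫_{B(0, l_i)} (1/2π) log|θ̃| · V_i(x_i + r_i θ̃) e^{v_i(θ̃)} dθ̃ ≤ C' for all i. -/

import Mathlib

open MeasureTheory Filter Metric

abbrev E2 := EuclideanSpace ℝ (Fin 2)

noncomputable def pd (j : Fin 2) (u : E2 → ℝ) (x : E2) : ℝ :=
  fderiv ℝ u x (EuclideanSpace.single j 1)

noncomputable def lapl (u : E2 → ℝ) (x : E2) : ℝ :=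
  pd 0 (pd 0 u) x + pd 1 (pd 1 u) x

/-!
Rescale at the maximum: `v ≤ 0 = v 0` solves `-Δv = W exp v` with `0 ≤ W ≤ b` on a ball of radius
tending to infinity, where `∫ exp v ≤ C₀`.

The means of `v` against the dilates of `(1 - |z|²)₊` have a derivative in the scale which is a
weighted Riesz mass of `-Δv`. If `∫ -Δv` over a large fixed ball stayed close to `4π`, Jensen's
inequality on dyadic annuli would push `∫ exp v` above `C₀`; hence some ball `B(0, s₀)`, with `s₀`
depending only on `b` and `C₀`, carries mass at least `2πκ` with `κ > 2`.

Comparing the means centred at `x` and at `0`, which needs only `v ≤ 0`, gives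
`v x ≤ C - κ log |x| + p x`, where `p` is a logarithmic potential of the mass outside `B(0, s₀)`.
A total mass of at most `8π + ε` leaves less than `2πβ` there for some `2 < β < κ`, so by Jensen's
inequality `|x|^(κ - β) exp (v x)` is dominated by the convolution of that mass with the integrable
kernel `max(1, |z|)^(-β)`. The factor `|x|^(κ - β)` absorbs the logarithm, which bounds the moment
on every fixed ball independently of its radius, and a diagonal choice of radii concludes.
-/

open Set Real Topology

section PartialDerivatives

variable {u : E2 → ℝ} {x : E2}

lemma fderiv_apply_eq_sum_pd (u : E2 → ℝ) (x z : E2) :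
    fderiv ℝ u x z = pd 0 u x * z 0 + pd 1 u x * z 1 := by
  have hz : z = z 0 • EuclideanSpace.single (0 : Fin 2) (1 : ℝ)
      + z 1 • EuclideanSpace.single (1 : Fin 2) (1 : ℝ) := by
    ext i
    fin_cases i <;> simp
  conv_lhs => rw [hz]
  simp [pd, mul_comm]

lemma continuous_pd (hu : ContDiff ℝ 1 u) (k : Fin 2) : Continuous (pd k u) :=
  (hu.continuous_fderiv one_ne_zero).clm_apply continuous_const

lemma contDiff_pd (hu : ContDiff ℝ 2 u) (k : Fin 2) : ContDiff ℝ 1 (pd k u) :=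
  (hu.fderiv_right (m := 1) (by norm_num)).clm_apply contDiff_const

lemma continuous_lapl (hu : ContDiff ℝ 2 u) : Continuous (lapl u) :=
  (continuous_pd (contDiff_pd hu 0) 0).add (continuous_pd (contDiff_pd hu 1) 1)

lemma differentiableAt_pd (hu : ContDiffAt ℝ 2 u x) (k : Fin 2) :
    DifferentiableAt ℝ (pd k u) x :=
  ((hu.fderiv_right (m := 1) (by norm_num)).differentiableAt one_ne_zero).clm_apply
    (differentiableAt_const _)

lemma pd_comp_add_smul {z : E2} {t : ℝ} (hu : DifferentiableAt ℝ u (x + t • z)) (k : Fin 2) :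
    pd k (fun z ↦ u (x + t • z)) z = t * pd k u (x + t • z) := by
  have haff : HasFDerivAt (fun z : E2 ↦ x + t • z) (t • ContinuousLinearMap.id ℝ E2) z :=
    ((hasFDerivAt_id z).const_smul t).const_add x
  have hcomp : HasFDerivAt (fun z ↦ u (x + t • z)) _ z := hu.hasFDerivAt.comp z haff
  rw [pd, hcomp.fderiv]
  simp [pd]

lemma pd_eventuallyEq {w : E2 → ℝ} (h : u =ᶠ[𝓝 x] w) (k : Fin 2) : pd k u =ᶠ[𝓝 x] pd k w := by
  filter_upwards [h.fderiv (𝕜 := ℝ)] with y hy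
  rw [pd, pd, hy]

lemma lapl_congr {w : E2 → ℝ} (h : u =ᶠ[𝓝 x] w) : lapl u x = lapl w x := by
  rw [lapl, lapl, (pd_eventuallyEq (pd_eventuallyEq h 0) 0).eq_of_nhds,
    (pd_eventuallyEq (pd_eventuallyEq h 1) 1).eq_of_nhds]

lemma integral_pd_mul_eq_neg {F G : E2 → ℝ} (hF : ContDiff ℝ 1 F) (hG : ContDiff ℝ 1 G)
    (hGc : HasCompactSupport G) (k : Fin 2) :
    ∫ z, pd k F z * G z = -∫ z, F z * pd k G z := by
  have hGc' : HasCompactSupport (pd k G) := hGc.fderiv_apply (𝕜 := ℝ) _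
  have h := integral_mul_fderiv_eq_neg_fderiv_mul_of_integrable (μ := (volume : Measure E2))
    (f := F) (g := G) (v := EuclideanSpace.single k (1 : ℝ))
    (((continuous_pd hF k).mul hG.continuous).integrable_of_hasCompactSupport hGc.mul_left)
    ((hF.continuous.mul (continuous_pd hG k)).integrable_of_hasCompactSupport hGc'.mul_left)
    ((hF.continuous.mul hG.continuous).integrable_of_hasCompactSupport hGc.mul_left)
    (fun x _ ↦ hF.differentiable one_ne_zero x) (fun x _ ↦ hG.differentiable one_ne_zero x)
  exact neg_eq_iff_eq_neg.mp h.symm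

end PartialDerivatives

lemma hasDerivAt_integral_comp_add_smul_mul {E : Type*} [NormedAddCommGroup E] [NormedSpace ℝ E]
    [MeasurableSpace E] [BorelSpace E] [SecondCountableTopology E] {μ : Measure E}
    [IsFiniteMeasureOnCompacts μ] {F ω : E → ℝ} (hF : ContDiff ℝ 1 F) (hω : Continuous ω)
    (hωc : HasCompactSupport ω) (x : E) (t : ℝ) :
    HasDerivAt (fun t : ℝ ↦ ∫ z, F (x + t • z) * ω z ∂μ)
      (∫ z, fderiv ℝ F (x + t • z) z * ω z ∂μ) t := by
  have hFc := hF.continuous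
  have hD : Continuous fun p : ℝ × E ↦ fderiv ℝ F (x + p.1 • p.2) p.2 :=
    ((hF.continuous_fderiv one_ne_zero).comp (by fun_prop)).clm_apply continuous_snd
  obtain ⟨C, hC⟩ := ((isCompact_Icc (a := t - 1) (b := t + 1)).prod
    hωc.isCompact).exists_bound_of_continuousOn hD.continuousOn
  refine (hasDerivAt_integral_of_dominated_loc_of_deriv_le (s := Icc (t - 1) (t + 1))
    (bound := fun z ↦ C * |ω z|) (F' := fun s z ↦ fderiv ℝ F (x + s • z) z * ω z)
    (Icc_mem_nhds (by linarith) (by linarith)) ?_ ?_ ?_ ?_ ?_ ?_).2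
  · exact .of_forall fun s ↦ by fun_prop
  · exact Continuous.integrable_of_hasCompactSupport (by fun_prop) hωc.mul_left
  · exact ((hD.comp (.prodMk_right t)).mul hω).aestronglyMeasurable
  · refine .of_forall fun z s hs ↦ ?_
    by_cases hz : z ∈ tsupport ω
    · rw [norm_mul]
      exact mul_le_mul_of_nonneg_right (hC (s, z) ⟨hs, hz⟩) (norm_nonneg _)
    · simp [image_eq_zero_of_notMem_tsupport hz]
  · exact (hω.integrable_of_hasCompactSupport hωc).abs.const_mul C
  · refine .of_forall fun z s _ ↦ HasDerivAt.mul_const ?_ _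
    have hline : HasDerivAt (fun s : ℝ ↦ x + s • z) z s := by
      simpa using ((hasDerivAt_id s).smul_const z).const_add x
    exact (hF.differentiable one_ne_zero _).hasFDerivAt.comp_hasDerivAt s hline

/-- The paraboloid cap `(1 - ‖z‖²)₊` (the Epanechnikov kernel up to normalisation): the weight used
to average functions over balls. Its square is `C¹`, with gradient `-4 z cap z`. -/
noncomputable def cap (z : E2) : ℝ := max 0 (1 - ‖z‖ ^ 2)

section Cap

variable {z : E2}

lemma cap_nonneg (z : E2) : 0 ≤ cap z := le_max_left _ _

lemma cap_le_one (z : E2) : cap z ≤ 1 := max_le zero_le_one (by linarith [sq_nonneg ‖z‖])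

lemma cap_of_one_le_norm (hz : 1 ≤ ‖z‖) : cap z = 0 := max_eq_left (by nlinarith)

@[fun_prop]
lemma continuous_cap : Continuous cap := by
  unfold cap
  fun_prop

lemma cap_le_cap {w : E2} (h : ‖w‖ ≤ ‖z‖) : cap z ≤ cap w :=
  max_le_max le_rfl (by gcongr)

lemma cap_inv_smul_of_le_norm {t : ℝ} (ht : 0 < t) (hz : t ≤ ‖z‖) : cap (t⁻¹ • z) = 0 := by
  refine cap_of_one_le_norm ?_
  rwa [norm_smul, norm_inv, norm_of_nonneg ht.le, inv_mul_eq_div, one_le_div ht]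

lemma hasCompactSupport_cap : HasCompactSupport cap :=
  .intro (isCompact_closedBall (0 : E2) 1) fun z hz ↦
    cap_of_one_le_norm (by simpa using (not_le.mp (mem_closedBall_zero_iff.not.mp hz)).le)

lemma hasCompactSupport_cap_sq : HasCompactSupport fun z ↦ cap z ^ 2 :=
  hasCompactSupport_cap.comp_left (g := fun s ↦ s ^ 2) (by simp)

lemma hasCompactSupport_cap_inv_smul_sub {t : ℝ} (ht : t ≠ 0) (x : E2) :
    HasCompactSupport fun y ↦ cap (t⁻¹ • (y - x)) :=
  hasCompactSupport_cap.comp_homeomorph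
    ((Homeomorph.subRight x).trans (Homeomorph.smulOfNeZero t⁻¹ (inv_ne_zero ht)))

lemma hasDerivAt_max_zero_sq (s : ℝ) :
    HasDerivAt (fun s : ℝ ↦ max 0 s ^ 2) (2 * max 0 s) s := by
  have hne : ∀ s : ℝ, s ≠ 0 → HasDerivAt (fun s : ℝ ↦ max 0 s ^ 2) (2 * max 0 s) s := by
    intro s hs
    rcases hs.lt_or_gt with hs | hs
    · have : (fun s : ℝ ↦ max 0 s ^ 2) =ᶠ[𝓝 s] fun _ ↦ 0 := by
        filter_upwards [Iio_mem_nhds hs] with t ht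
        simp [(mem_Iio.mp ht).le]
      simpa [hs.le] using (hasDerivAt_const s (0 : ℝ)).congr_of_eventuallyEq this
    · have : (fun s : ℝ ↦ max 0 s ^ 2) =ᶠ[𝓝 s] fun s ↦ s ^ 2 := by
        filter_upwards [Ioi_mem_nhds hs] with t ht
        simp [(mem_Ioi.mp ht).le]
      simpa [hs.le] using (hasDerivAt_pow 2 s).congr_of_eventuallyEq this
  rcases eq_or_ne s 0 with rfl | hs
  · exact hasDerivAt_of_hasDerivAt_of_ne hne (by fun_prop) (by fun_prop)
  · exact hne s hs

lemma contDiff_cap_sq : ContDiff ℝ 1 fun z ↦ cap z ^ 2 := by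
  have hmax : ContDiff ℝ 1 fun s : ℝ ↦ max 0 s ^ 2 := by
    refine contDiff_one_iff_deriv.2 ⟨fun s ↦ (hasDerivAt_max_zero_sq s).differentiableAt, ?_⟩
    rw [funext fun s ↦ (hasDerivAt_max_zero_sq s).deriv]
    fun_prop
  exact hmax.comp (contDiff_const.sub (contDiff_norm_sq ℝ))

lemma pd_cap_sq (k : Fin 2) (z : E2) : pd k (fun z ↦ cap z ^ 2) z = -(4 * cap z * z k) := by
  have hnorm : HasFDerivAt (fun z : E2 ↦ 1 - ‖z‖ ^ 2) (-(2 • innerSL ℝ z)) z :=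
    (hasStrictFDerivAt_norm_sq z).hasFDerivAt.const_sub 1
  have hcap : HasFDerivAt (fun z ↦ cap z ^ 2) _ z :=
    HasDerivAt.comp_hasFDerivAt (f := fun z : E2 ↦ 1 - ‖z‖ ^ 2) z
      (hasDerivAt_max_zero_sq (1 - ‖z‖ ^ 2)) hnorm
  rw [pd, hcap.fderiv]
  simp [EuclideanSpace.inner_single_right, cap]
  ring

lemma integral_Ioi_mul_max_zero_one_sub_sq :
    ∫ r in Ioi (0 : ℝ), r * max 0 (1 - r ^ 2) = 1 / 4 := by
  have hsupp : ∀ r ∈ Ioi (0 : ℝ) \ Ioc 0 1, r * max 0 (1 - r ^ 2) = 0 := by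
    rintro r ⟨hr0, hr⟩
    have hr1 : 1 < r := not_le.mp fun h ↦ hr ⟨hr0, h⟩
    rw [max_eq_left (by nlinarith), mul_zero]
  have hpoly : ∀ r ∈ Ioc (0 : ℝ) 1, r * max 0 (1 - r ^ 2) = r - r ^ 3 := by
    intro r hr
    rw [max_eq_right (by nlinarith [hr.1, hr.2])]
    ring
  rw [setIntegral_eq_of_subset_of_forall_sdiff_eq_zero measurableSet_Ioi Ioc_subset_Ioi_self hsupp,
    setIntegral_congr_fun measurableSet_Ioc hpoly,
    ← intervalIntegral.integral_of_le zero_le_one,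
    intervalIntegral.integral_sub (by simp) (by simp), integral_id, integral_pow]
  norm_num

lemma integral_cap : ∫ z, cap z = π / 2 := by
  have hpolar := integral_fun_norm_addHaar (volume : Measure E2) fun r ↦ max 0 (1 - r ^ 2)
  have hvol : volume.real (ball (0 : E2) 1) = π := by
    simp [Measure.real, EuclideanSpace.volume_ball_fin_two, pi_nonneg]
  simp only [hvol, finrank_euclideanSpace, Fintype.card_fin, Nat.add_one_sub_one, pow_one,
    smul_eq_mul, integral_Ioi_mul_max_zero_one_sub_sq, nsmul_eq_mul] at hpolar
  simp only [cap, hpolar]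
  push_cast
  ring

lemma integral_comp_inv_smul_sub (F : E2 → ℝ) (x : E2) (t : ℝ) :
    ∫ y, F (t⁻¹ • (y - x)) = t ^ 2 * ∫ z, F z := by
  rw [integral_sub_right_eq_self (fun y ↦ F (t⁻¹ • y)) x, Measure.integral_comp_inv_smul]
  simp [finrank_euclideanSpace]

lemma integral_mul_comp_inv_smul_sub (F G : E2 → ℝ) (x : E2) {t : ℝ} (ht : t ≠ 0) :
    ∫ y, F y * G (t⁻¹ • (y - x)) = t ^ 2 * ∫ z, F (x + t • z) * G z := by
  rw [← integral_comp_inv_smul_sub _ x]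
  simp [smul_inv_smul₀ ht]

end Cap

/-- The average of `v` over `ball x t` against the weight `cap`, normalised to total mass one. -/
noncomputable def capMean (v : E2 → ℝ) (x : E2) (t : ℝ) : ℝ :=
  2 / π * ∫ z, v (x + t • z) * cap z

/-- The Riesz measure `-Δv dx` on the disc `ball 0 L` of a function superharmonic there. -/
noncomputable def rieszMeasure (v : E2 → ℝ) (L : ℝ) : Measure E2 :=
  (volume.restrict (ball 0 L)).withDensity fun x ↦ ENNReal.ofReal (-lapl v x)

/-- The mass of `μ` near `x` at scale `t`, measured with the weight `cap ^ 2`. -/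
noncomputable def capMass (μ : Measure E2) (x : E2) (t : ℝ) : ℝ :=
  ∫ y, cap (t⁻¹ • (y - x)) ^ 2 ∂μ

section CapMass

variable {μ : Measure E2} [IsFiniteMeasure μ] {x : E2} {t : ℝ}

lemma capMass_le_real_ball (ht : 0 < t) : capMass μ x t ≤ μ.real (ball x t) := by
  have hle : ∀ y, cap (t⁻¹ • (y - x)) ^ 2 ≤ (ball x t).indicator 1 y := by
    intro y
    by_cases hy : y ∈ ball x t
    · rw [indicator_of_mem hy]
      exact pow_le_one₀ (cap_nonneg _) (cap_le_one _)
    · have hty : t ≤ ‖y - x‖ := by simpa [dist_eq_norm] using hy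
      simp [hy, cap_inv_smul_of_le_norm ht hty]
  calc capMass μ x t ≤ ∫ y, (ball x t).indicator 1 y ∂μ :=
        integral_mono_of_nonneg (.of_forall fun _ ↦ sq_nonneg _)
          ((integrable_const 1).indicator measurableSet_ball) (.of_forall hle)
    _ = μ.real (ball x t) := integral_indicator_one measurableSet_ball

lemma continuousAt_capMass (ht : t ≠ 0) : ContinuousAt (capMass μ x) t := by
  refine continuousAt_of_dominated (bound := fun _ ↦ 1) ?_ ?_ (integrable_const 1) ?_
  · exact .of_forall fun s ↦ by fun_prop
  · refine .of_forall fun s ↦ .of_forall fun y ↦ ?_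
    rw [norm_of_nonneg (sq_nonneg _)]
    exact pow_le_one₀ (cap_nonneg _) (cap_le_one _)
  · refine .of_forall fun y ↦ (continuous_cap.continuousAt.comp ?_).pow 2
    exact (continuousAt_inv₀ ht).smul continuousAt_const

lemma continuousOn_capMass_div {s : ℝ} (hs : 0 < s) :
    ContinuousOn (fun τ ↦ capMass μ x τ / τ) (Icc s t) := fun _ hτ ↦
  have hτ0 := (hs.trans_le hτ.1).ne'
  ((continuousAt_capMass hτ0).div continuousAt_id hτ0).continuousWithinAt

end CapMass

section RieszMeasure

variable {v : E2 → ℝ} {L : ℝ}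

lemma isFiniteMeasure_rieszMeasure (hv : ContDiff ℝ 2 v) : IsFiniteMeasure (rieszMeasure v L) :=
  isFiniteMeasure_withDensity_ofReal
    ((continuous_lapl hv).neg.locallyIntegrable.integrableOn_isCompact
      (isCompact_closedBall 0 L) |>.mono_set ball_subset_closedBall).2

lemma integral_rieszMeasure (hv : ContDiff ℝ 2 v) (hf : ∀ x ∈ ball (0 : E2) L, 0 ≤ -lapl v x)
    (g : E2 → ℝ) : ∫ x, g x ∂rieszMeasure v L = ∫ x in ball (0 : E2) L, -lapl v x * g x := by
  rw [rieszMeasure, integral_withDensity_eq_integral_toReal_smul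
    (f := fun x ↦ ENNReal.ofReal (-lapl v x)) (continuous_lapl hv).neg.measurable.ennreal_ofReal
    (by simp)]
  refine setIntegral_congr_fun measurableSet_ball fun x hx ↦ ?_
  simp [ENNReal.toReal_ofReal (hf x hx)]

lemma real_rieszMeasure (hv : ContDiff ℝ 2 v) (hf : ∀ x ∈ ball (0 : E2) L, 0 ≤ -lapl v x)
    {s : ℝ} (hs : s ≤ L) :
    (rieszMeasure v L).real (ball 0 s) = ∫ x in ball (0 : E2) s, -lapl v x := by
  rw [← integral_indicator_one measurableSet_ball, integral_rieszMeasure hv hf]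
  have hmul : ∀ x, -lapl v x * (ball 0 s).indicator 1 x
      = (ball 0 s).indicator (fun x ↦ -lapl v x) x := fun x ↦ by
    by_cases hx : x ∈ ball (0 : E2) s <;> simp [hx]
  simp only [hmul]
  rw [setIntegral_indicator measurableSet_ball, inter_eq_right.mpr (ball_subset_ball hs)]

lemma real_rieszMeasure_univ (hv : ContDiff ℝ 2 v)
    (hf : ∀ x ∈ ball (0 : E2) L, 0 ≤ -lapl v x) :
    (rieszMeasure v L).real univ = ∫ x in ball (0 : E2) L, -lapl v x := by
  simpa using integral_rieszMeasure hv hf fun _ ↦ 1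

lemma capMass_rieszMeasure (hv : ContDiff ℝ 2 v) (hf : ∀ x ∈ ball (0 : E2) L, 0 ≤ -lapl v x)
    {x : E2} {t : ℝ} (ht : 0 < t) (hx : ball x t ⊆ ball 0 L) :
    capMass (rieszMeasure v L) x t = t ^ 2 * ∫ z, -lapl v (x + t • z) * cap z ^ 2 := by
  rw [capMass, integral_rieszMeasure hv hf, setIntegral_eq_integral_of_forall_compl_eq_zero,
    integral_mul_comp_inv_smul_sub _ (fun z ↦ cap z ^ 2) x ht.ne']
  intro y hy
  have hty : t ≤ ‖y - x‖ := by simpa [dist_eq_norm] using notMem_subset hx hy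
  simp [cap_inv_smul_of_le_norm ht hty]

end RieszMeasure

section CapMean

variable {v : E2 → ℝ} {x : E2}

lemma capMean_zero : capMean v x 0 = v x := by
  simp only [capMean, zero_smul, add_zero, integral_const_mul, integral_cap]
  field_simp

lemma integral_comp_add_smul_mul_coord_mul_cap {F : E2 → ℝ} (hF : ContDiff ℝ 1 F) (x : E2)
    (t : ℝ) (k : Fin 2) :
    ∫ z, F (x + t • z) * (z k * cap z) = t / 4 * ∫ z, pd k F (x + t • z) * cap z ^ 2 := by
  have hparts := integral_pd_mul_eq_neg (F := fun z ↦ F (x + t • z)) (by fun_prop) contDiff_cap_sq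
    hasCompactSupport_cap_sq k
  simp only [pd_comp_add_smul (hF.differentiable one_ne_zero _), pd_cap_sq, mul_assoc,
    integral_const_mul, mul_neg, integral_neg, neg_neg, mul_left_comm _ (4 : ℝ)] at hparts
  simp only [mul_comm (_ : ℝ) (cap _)]
  linarith

lemma hasDerivAt_capMean (hv : ContDiff ℝ 2 v) (x : E2) (t : ℝ) :
    HasDerivAt (capMean v x) (t / (2 * π) * ∫ z, lapl v (x + t • z) * cap z ^ 2) t := by
  have hpd := continuous_pd (hv.of_le one_le_two)
  have hpd2 := fun k ↦ continuous_pd (contDiff_pd hv k) k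
  have hgrad : ∫ z, fderiv ℝ v (x + t • z) z * cap z
      = t / 4 * ∫ z, lapl v (x + t • z) * cap z ^ 2 := by
    simp only [fderiv_apply_eq_sum_pd, lapl, add_mul, mul_assoc]
    rw [integral_add, integral_add, mul_add,
      integral_comp_add_smul_mul_coord_mul_cap (contDiff_pd hv 0),
      integral_comp_add_smul_mul_coord_mul_cap (contDiff_pd hv 1)]
    · exact Continuous.integrable_of_hasCompactSupport (by fun_prop)
        hasCompactSupport_cap_sq.mul_left
    · exact Continuous.integrable_of_hasCompactSupport (by fun_prop)
        hasCompactSupport_cap_sq.mul_left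
    · exact Continuous.integrable_of_hasCompactSupport (by fun_prop)
        (hasCompactSupport_cap.mul_left.mul_left)
    · exact Continuous.integrable_of_hasCompactSupport (by fun_prop)
        (hasCompactSupport_cap.mul_left.mul_left)
  refine ((hasDerivAt_integral_comp_add_smul_mul (μ := volume) (hv.of_le one_le_two)
    continuous_cap hasCompactSupport_cap x t).const_mul (2 / π)).congr_deriv ?_
  rw [hgrad]
  ring

lemma sub_le_capMean_one {b : ℝ} (hv : ContDiff ℝ 2 v) (hb0 : 0 ≤ b)
    (hb : ∀ y ∈ ball x 1, -lapl v y ≤ b) : v x - b / 4 ≤ capMean v x 1 := by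
  have hderiv : ∀ t ∈ Ioo (0 : ℝ) 1, -(b / 4) ≤ deriv (capMean v x) t := by
    intro t ht
    have hpt : ∀ z, -b * cap z ≤ lapl v (x + t • z) * cap z ^ 2 := by
      intro z
      rcases le_or_gt 1 ‖z‖ with hz | hz
      · simp [cap_of_one_le_norm hz]
      · have hmem : x + t • z ∈ ball x 1 := by
          rw [mem_ball, dist_self_add_left, norm_smul, norm_of_nonneg ht.1.le]
          nlinarith [ht.1, ht.2, norm_nonneg z]
        have hsq : cap z ^ 2 ≤ cap z := by nlinarith [cap_nonneg z, cap_le_one z]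
        nlinarith [hb _ hmem, sq_nonneg (cap z)]
    have hint : -b * (π / 2) ≤ ∫ z, lapl v (x + t • z) * cap z ^ 2 := by
      rw [← integral_cap, ← integral_const_mul]
      refine integral_mono ?_ ?_ hpt
      · exact (continuous_cap.integrable_of_hasCompactSupport hasCompactSupport_cap).const_mul _
      · have := continuous_lapl hv
        exact Continuous.integrable_of_hasCompactSupport (by fun_prop)
          hasCompactSupport_cap_sq.mul_left
    rw [(hasDerivAt_capMean hv x t).deriv]
    calc -(b / 4) ≤ t * -(b / 4) := by nlinarith [ht.1, ht.2]
      _ = t / (2 * π) * (-b * (π / 2)) := by field_simp; norm_num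
      _ ≤ t / (2 * π) * ∫ z, lapl v (x + t • z) * cap z ^ 2 := by
          gcongr
          exact div_nonneg ht.1.le two_pi_pos.le
  have hmean := (convex_Icc (0 : ℝ) 1).mul_sub_le_image_sub_of_le_deriv
    (fun t _ ↦ (hasDerivAt_capMean hv x t).continuousAt.continuousWithinAt)
    (fun t _ ↦ (hasDerivAt_capMean hv x t).differentiableAt.differentiableWithinAt)
    (by simpa using hderiv) 0 (by simp) 1 (by simp) zero_le_one
  rw [capMean_zero] at hmean
  linarith

lemma capMean_sub_capMean {L s t : ℝ} (hv : ContDiff ℝ 2 v)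
    (hf : ∀ x ∈ ball (0 : E2) L, 0 ≤ -lapl v x) (hs : 0 < s) (hst : s ≤ t)
    (hx : ball x t ⊆ ball 0 L) :
    capMean v x s - capMean v x t
      = (2 * π)⁻¹ * ∫ τ in s..t, capMass (rieszMeasure v L) x τ / τ := by
  have := isFiniteMeasure_rieszMeasure (L := L) hv
  have hderiv : ∀ τ ∈ uIcc s t, HasDerivAt (fun τ ↦ -capMean v x τ)
      ((2 * π)⁻¹ * (capMass (rieszMeasure v L) x τ / τ)) τ := by
    intro τ hτ
    rw [uIcc_of_le hst] at hτ
    have hτ0 := hs.trans_le hτ.1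
    refine (hasDerivAt_capMean hv x τ).neg.congr_deriv ?_
    rw [capMass_rieszMeasure hv hf hτ0 ((ball_subset_ball hτ.2).trans hx)]
    simp only [neg_mul, integral_neg]
    field_simp
  rw [← intervalIntegral.integral_const_mul, intervalIntegral.integral_eq_sub_of_hasDerivAt hderiv]
  · ring
  · exact ((continuousOn_capMass_div hs).const_smul (2 * π)⁻¹).intervalIntegrable_of_Icc hst

lemma capMean_sub_capMean_le {L s t m : ℝ} (hv : ContDiff ℝ 2 v)
    (hf : ∀ x ∈ ball (0 : E2) L, 0 ≤ -lapl v x) (hs : 0 < s) (hst : s ≤ t)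
    (hx : ball x t ⊆ ball 0 L) (hm : (rieszMeasure v L).real (ball x t) ≤ m) :
    capMean v x s - capMean v x t ≤ m / (2 * π) * log (t / s) := by
  have := isFiniteMeasure_rieszMeasure (L := L) hv
  have hle : ∫ τ in s..t, capMass (rieszMeasure v L) x τ / τ ≤ ∫ τ in s..t, m * τ⁻¹ := by
    refine intervalIntegral.integral_mono_on hst
      ((continuousOn_capMass_div hs).intervalIntegrable_of_Icc hst) ?_ fun τ hτ ↦ ?_
    · refine ContinuousOn.intervalIntegrable_of_Icc hst (.const_mul (continuousOn_inv₀.mono ?_) m)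
      exact fun τ hτ ↦ (hs.trans_le hτ.1).ne'
    · have hτ0 := hs.trans_le hτ.1
      rw [← div_eq_mul_inv]
      gcongr
      exact (capMass_le_real_ball hτ0).trans
        ((measureReal_mono (ball_subset_ball hτ.2)).trans hm)
  rw [intervalIntegral.integral_const_mul, integral_inv_of_pos hs (hs.trans_le hst)] at hle
  rw [capMean_sub_capMean hv hf hs hst hx]
  calc (2 * π)⁻¹ * ∫ τ in s..t, capMass (rieszMeasure v L) x τ / τ
      ≤ (2 * π)⁻¹ * (m * log (t / s)) := by gcongr
    _ = m / (2 * π) * log (t / s) := by ring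

end CapMean

section MeanGrowth

variable {v : E2 → ℝ} {x : E2} {t : ℝ}

-- The tangent line of `exp` at `J = ∫ g w`, together with `exp J * (1 - J) ≤ 1`.
lemma exp_integral_mul_le {α : Type*} [MeasurableSpace α] {μ : Measure α} {g w : α → ℝ}
    (hw0 : ∀ x, 0 ≤ w x) (hw : Integrable w μ) (hw1 : ∫ x, w x ∂μ ≤ 1)
    (hg : Integrable (fun x ↦ g x * w x) μ) (hexp : Integrable (fun x ↦ exp (g x) * w x) μ) :
    exp (∫ x, g x * w x ∂μ) ≤ ∫ x, exp (g x) * w x ∂μ + (1 - ∫ x, w x ∂μ) := by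
  set J := ∫ x, g x * w x ∂μ with hJ
  have htangent : ∀ x, exp J * (1 - J) * w x + exp J * (g x * w x) ≤ exp (g x) * w x := by
    intro x
    have hexp_sub : exp J * (g x - J + 1) ≤ exp (g x) := by
      calc exp J * (g x - J + 1) ≤ exp J * exp (g x - J) := by
            gcongr
            exact add_one_le_exp _
        _ = exp (g x) := by rw [← exp_add, add_sub_cancel]
    nlinarith [hw0 x]
  have hint := integral_mono ((hw.const_mul _).add (hg.const_mul _)) hexp htangent
  rw [integral_add' (hw.const_mul _) (hg.const_mul _), integral_const_mul, integral_const_mul,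
    ← hJ] at hint
  have hle_one : exp J * (1 - J) ≤ 1 := by
    calc exp J * (1 - J) ≤ exp J * exp (-J) := by
          gcongr
          linarith [add_one_le_exp (-J)]
      _ = 1 := by rw [← exp_add, add_neg_cancel, exp_zero]
  nlinarith

lemma integral_mul_cap_inv_smul_sub (F : E2 → ℝ) (x : E2) (ht : t ≠ 0) :
    ∫ y, F y * cap (t⁻¹ • (y - x)) = π / 2 * (t ^ 2 * capMean F x t) := by
  rw [integral_mul_comp_inv_smul_sub F cap x ht, capMean]
  field_simp

lemma integrable_mul_cap_inv_smul_sub {F : E2 → ℝ} (hF : Continuous F) (x : E2) (ht : t ≠ 0) :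
    Integrable fun y ↦ F y * cap (t⁻¹ • (y - x)) :=
  Continuous.integrable_of_hasCompactSupport (by fun_prop)
    (hasCompactSupport_cap_inv_smul_sub ht x).mul_left

/-- The annular weight on `ball x (2 * t)` of total mass one, against which the average of a
function is the combination `(4 * capMean F x (2 * t) - capMean F x t) / 3` of its cap means. -/
noncomputable def annularCap (x : E2) (t : ℝ) (y : E2) : ℝ :=
  2 / (3 * π * t ^ 2) * (cap ((2 * t)⁻¹ • (y - x)) - cap (t⁻¹ • (y - x)))

lemma annularCap_nonneg (ht : 0 < t) (y : E2) : 0 ≤ annularCap x t y := by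
  refine mul_nonneg (by positivity) (sub_nonneg.mpr (cap_le_cap ?_))
  rw [norm_smul, norm_smul, norm_inv, norm_inv, norm_of_nonneg ht.le,
    norm_of_nonneg (by positivity)]
  gcongr
  linarith

lemma integrable_mul_annularCap {F : E2 → ℝ} (hF : Continuous F) (ht : 0 < t) :
    Integrable fun y ↦ F y * annularCap x t y := by
  have h := (((integrable_mul_cap_inv_smul_sub hF x (mul_pos two_pos ht).ne').sub
    (integrable_mul_cap_inv_smul_sub hF x ht.ne')).const_mul (2 / (3 * π * t ^ 2)))
  refine h.congr (.of_forall fun y ↦ ?_)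
  simp only [annularCap, Pi.sub_apply]
  ring

lemma integral_mul_annularCap {F : E2 → ℝ} (hF : Continuous F) (x : E2) (ht : 0 < t) :
    ∫ y, F y * annularCap x t y = (4 * capMean F x (2 * t) - capMean F x t) / 3 := by
  have h2t : 2 * t ≠ 0 := by positivity
  simp only [annularCap, mul_left_comm (F _), mul_sub (F _)]
  rw [integral_const_mul, integral_sub (integrable_mul_cap_inv_smul_sub hF x h2t)
    (integrable_mul_cap_inv_smul_sub hF x ht.ne'), integral_mul_cap_inv_smul_sub F x h2t,
    integral_mul_cap_inv_smul_sub F x ht.ne']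
  field_simp
  ring

lemma capMean_const (c : ℝ) : capMean (fun _ ↦ c) x t = c := by
  rw [capMean, integral_const_mul, integral_cap]
  field_simp

lemma integral_annularCap (ht : 0 < t) : ∫ y, annularCap x t y = 1 := by
  have h := integral_mul_annularCap (continuous_const (y := (1 : ℝ))) x ht
  simp only [one_mul, capMean_const] at h
  linarith

lemma exp_annular_capMean_le (hv : Continuous v) (x : E2) (ht : 0 < t) :
    exp ((4 * capMean v x (2 * t) - capMean v x t) / 3)
      ≤ (4 * capMean (fun y ↦ exp (v y)) x (2 * t) - capMean (fun y ↦ exp (v y)) x t) / 3 := by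
  have hexp : Continuous fun y ↦ exp (v y) := by fun_prop
  have hint := integral_annularCap (x := x) ht
  have hannular : Integrable (annularCap x t) := by
    simpa using integrable_mul_annularCap (x := x) (continuous_const (y := (1 : ℝ))) ht
  have h := exp_integral_mul_le (annularCap_nonneg ht) hannular hint.le
    (integrable_mul_annularCap hv ht) (integrable_mul_annularCap hexp ht)
  rwa [hint, sub_self, add_zero, integral_mul_annularCap hv x ht,
    integral_mul_annularCap hexp x ht] at h

lemma sq_mul_capMean_le_setIntegral {F : E2 → ℝ} (hF : Continuous F) (hF0 : ∀ y, 0 ≤ F y)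
    (x : E2) (ht : 0 < t) : π / 2 * (t ^ 2 * capMean F x t) ≤ ∫ y in ball x t, F y := by
  rw [← integral_mul_cap_inv_smul_sub F x ht.ne', ← integral_indicator measurableSet_ball]
  refine integral_mono (integrable_mul_cap_inv_smul_sub hF x ht.ne')
    ((integrable_indicator_iff measurableSet_ball).mpr ?_) fun y ↦ ?_
  · exact (hF.locallyIntegrable.integrableOn_isCompact (isCompact_closedBall x t)).mono_set
      ball_subset_closedBall
  · by_cases hy : y ∈ ball x t
    · rw [indicator_of_mem hy]
      exact mul_le_of_le_one_right (hF0 y) (cap_le_one _)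
    · have hty : t ≤ ‖y - x‖ := by simpa [dist_eq_norm] using hy
      simp [hy, cap_inv_smul_of_le_norm ht hty]

end MeanGrowth

/-- The rescaled solutions: a function `v` on `ball 0 L`, extended to the plane, with maximum
`v 0 = 0`, with `0 ≤ -Δv ≤ b exp v`, and with `∫ exp v ≤ C₀`. -/
structure IsBlowUpProfile (b C₀ L : ℝ) (v : E2 → ℝ) : Prop where
  contDiff : ContDiff ℝ 2 v
  apply_zero : v 0 = 0
  nonpos : ∀ x ∈ ball (0 : E2) L, v x ≤ 0
  neg_lapl_nonneg : ∀ x ∈ ball (0 : E2) L, 0 ≤ -lapl v x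
  neg_lapl_le : ∀ x ∈ ball (0 : E2) L, -lapl v x ≤ b * exp (v x)
  integral_exp_le : ∫ x in ball (0 : E2) L, exp (v x) ≤ C₀

namespace IsBlowUpProfile

variable {b C₀ L : ℝ} {v : E2 → ℝ}

lemma coeff_nonneg (h : IsBlowUpProfile b C₀ L v) (hL : 0 < L) : 0 ≤ b := by
  have h0 : (0 : E2) ∈ ball 0 L := mem_ball_self hL
  simpa [h.apply_zero] using (h.neg_lapl_nonneg 0 h0).trans (h.neg_lapl_le 0 h0)

lemma sub_le_capMean_one (h : IsBlowUpProfile b C₀ L v) {x : E2} (hx : ball x 1 ⊆ ball 0 L) :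
    v x - b / 4 ≤ capMean v x 1 := by
  have hb : 0 ≤ b := h.coeff_nonneg (pos_of_mem_ball (hx (mem_ball_self one_pos)))
  refine _root_.sub_le_capMean_one h.contDiff hb fun y hy ↦ (h.neg_lapl_le y (hx hy)).trans ?_
  exact mul_le_of_le_one_right hb (exp_le_one_iff.mpr (h.nonpos y (hx hy)))

lemma integrableOn_exp (h : IsBlowUpProfile b C₀ L v) :
    IntegrableOn (fun x ↦ exp (v x)) (ball 0 L) :=
  ((continuous_exp.comp h.contDiff.continuous).locallyIntegrable.integrableOn_isCompact
    (isCompact_closedBall 0 L)).mono_set ball_subset_closedBall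

lemma sq_mul_capMean_exp_le (h : IsBlowUpProfile b C₀ L v) {t : ℝ} (ht : 0 < t) (htL : t ≤ L) :
    π / 2 * (t ^ 2 * capMean (fun y ↦ exp (v y)) 0 t) ≤ C₀ :=
  calc π / 2 * (t ^ 2 * capMean (fun y ↦ exp (v y)) 0 t)
      ≤ ∫ y in ball 0 t, exp (v y) := sq_mul_capMean_le_setIntegral
        (continuous_exp.comp h.contDiff.continuous) (fun _ ↦ (exp_pos _).le) 0 ht
    _ ≤ ∫ y in ball 0 L, exp (v y) := setIntegral_mono_set h.integrableOn_exp
        (.of_forall fun _ ↦ (exp_pos _).le) (ball_subset_ball htL).eventuallyLE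
    _ ≤ C₀ := h.integral_exp_le

lemma annular_capMean_ge (h : IsBlowUpProfile b C₀ L v) {t κ : ℝ} (ht : 1 ≤ t) (htL : 2 * t ≤ L)
    (hκ : (rieszMeasure v L).real (ball 0 (2 * t)) ≤ 2 * π * κ) :
    -(b / 4) - κ * log t - 4 / 3 * κ * log 2
      ≤ (4 * capMean v 0 (2 * t) - capMean v 0 t) / 3 := by
  have := isFiniteMeasure_rieszMeasure (L := L) h.contDiff
  have ht0 : 0 < t := by positivity
  have hone := h.sub_le_capMean_one (x := 0) (ball_subset_ball (by linarith))
  have hκt : (rieszMeasure v L).real (ball 0 t) ≤ 2 * π * κ :=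
    (measureReal_mono (ball_subset_ball (by linarith))).trans hκ
  have h1t := capMean_sub_capMean_le h.contDiff h.neg_lapl_nonneg one_pos ht
    (ball_subset_ball (by linarith)) hκt
  have ht2 := capMean_sub_capMean_le h.contDiff h.neg_lapl_nonneg ht0 (by linarith : t ≤ 2 * t)
    (ball_subset_ball htL) hκ
  rw [mul_div_cancel_left₀ _ two_pi_pos.ne'] at h1t ht2
  rw [div_one] at h1t
  rw [mul_div_cancel_right₀ _ ht0.ne'] at ht2
  rw [h.apply_zero] at hone
  linarith

lemma capMean_exp_growth (h : IsBlowUpProfile b C₀ L v) {N k : ℕ} (hk : k < N)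
    (hL : (2 : ℝ) ^ N ≤ L)
    (hκ : (rieszMeasure v L).real (ball 0 (2 ^ N)) ≤ 2 * π * (2 + 1 / N)) :
    3 * exp (-(b / 4) - 5 * log 2)
      ≤ (2 ^ (k + 1)) ^ 2 * capMean (fun y ↦ exp (v y)) 0 (2 ^ (k + 1))
        - (2 ^ k) ^ 2 * capMean (fun y ↦ exp (v y)) 0 (2 ^ k) := by
  have := isFiniteMeasure_rieszMeasure (L := L) h.contDiff
  have hNpos : (0 : ℝ) < N := by exact_mod_cast Nat.zero_lt_of_lt hk
  have hkN : (2 : ℝ) * 2 ^ k ≤ 2 ^ N := by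
    rw [← pow_succ']
    exact pow_le_pow_right₀ one_le_two hk
  have hmean := h.annular_capMean_ge (t := 2 ^ k) (one_le_pow₀ one_le_two) (hkN.trans hL)
    ((measureReal_mono (ball_subset_ball hkN)).trans hκ)
  have hexponent : (k : ℝ) * (1 / N) ≤ 1 ∧ (1 : ℝ) / N ≤ 1 := by
    rw [mul_one_div, div_le_one hNpos, div_le_one hNpos]
    exact ⟨by exact_mod_cast hk.le, by exact_mod_cast Nat.one_le_of_lt hk⟩
  have hlog : -(b / 4) - 5 * log 2 ≤ 2 * (k * log 2)
      + (4 * capMean v 0 (2 * 2 ^ k) - capMean v 0 (2 ^ k)) / 3 := by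
    rw [log_pow] at hmean
    nlinarith [log_pos one_lt_two]
  have hpow : exp (2 * (k * log 2)) = (2 ^ k) ^ 2 := by
    rw [mul_comm 2, exp_mul, exp_nat_mul, exp_log two_pos, rpow_two]
  have hjensen := exp_annular_capMean_le h.contDiff.continuous 0 (t := 2 ^ k) (by positivity)
  calc 3 * exp (-(b / 4) - 5 * log 2)
      ≤ 3 * exp (2 * (k * log 2)
          + (4 * capMean v 0 (2 * 2 ^ k) - capMean v 0 (2 ^ k)) / 3) := by gcongr
    _ ≤ 3 * ((2 ^ k) ^ 2 * ((4 * capMean (fun y ↦ exp (v y)) 0 (2 * 2 ^ k)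
          - capMean (fun y ↦ exp (v y)) 0 (2 ^ k)) / 3)) := by
        rw [exp_add, hpow]
        gcongr
    _ = _ := by
        rw [pow_succ' (2 : ℝ) k]
        ring

-- If the Riesz mass stayed below `2 * π * (2 + 1 / N)`, every dyadic annulus up to scale `2 ^ N`
-- would carry a fixed amount of `∫ exp v ≤ C₀`.
lemma exists_le_real_rieszMeasure (b C₀ : ℝ) :
    ∃ κ > 2, ∃ s₀ ≥ 1, ∀ L ≥ s₀, ∀ v, IsBlowUpProfile b C₀ L v →
      2 * π * κ ≤ (rieszMeasure v L).real (ball 0 s₀) := by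
  set c := 3 * exp (-(b / 4) - 5 * log 2)
  obtain ⟨N, hN⟩ := exists_nat_gt (max 0 (2 / π * C₀ / c))
  have hN0 : (0 : ℝ) < N := (le_max_left _ _).trans_lt hN
  have hNc : 2 / π * C₀ < N * c := (div_lt_iff₀ (by positivity)).mp ((le_max_right _ _).trans_lt hN)
  refine ⟨2 + 1 / N, by simpa using hN0, 2 ^ N, one_le_pow₀ one_le_two, fun L hL v h ↦ ?_⟩
  by_contra! hκ
  set A : ℕ → ℝ := fun k ↦ (2 ^ k) ^ 2 * capMean (fun y ↦ exp (v y)) 0 (2 ^ k)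
  have hsum : N * c ≤ A N - A 0 := by
    rw [← Finset.sum_range_sub, ← nsmul_eq_mul, ← Finset.card_range N, ← Finset.sum_const,
      Finset.card_range]
    exact Finset.sum_le_sum fun k hk ↦ h.capMean_exp_growth (Finset.mem_range.mp hk) hL hκ.le
  have hA0 : 0 ≤ A 0 := by
    refine mul_nonneg (by positivity) (mul_nonneg (by positivity) (integral_nonneg fun z ↦ ?_))
    exact mul_nonneg (exp_pos _).le (cap_nonneg z)
  have hAN : π / 2 * A N ≤ C₀ := h.sq_mul_capMean_exp_le (by positivity) hL
  have hAN' : A N ≤ 2 / π * C₀ := by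
    calc A N = 2 / π * (π / 2 * A N) := by field_simp
      _ ≤ 2 / π * C₀ := by gcongr
  linarith

end IsBlowUpProfile

/-- The potential at `z` of the weights `cap ^ 2` superposed over the scales in `[1, R]`: up to an
error of at most one, the truncated logarithm `log⁺ (R / max 1 ‖z‖)`. -/
noncomputable def logKernel (R : ℝ) (z : E2) : ℝ := ∫ τ in (1 : ℝ)..R, τ⁻¹ * cap (τ⁻¹ • z) ^ 2

section LogKernel

variable {R : ℝ} {z : E2}

lemma cap_inv_smul_of_norm_le {τ : ℝ} (hτ : 0 < τ) (hz : ‖z‖ ≤ τ) :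
    cap (τ⁻¹ • z) = 1 - ‖z‖ ^ 2 / τ ^ 2 := by
  have hnorm : ‖τ⁻¹ • z‖ ^ 2 = ‖z‖ ^ 2 / τ ^ 2 := by
    rw [norm_smul, norm_inv, norm_of_nonneg hτ.le, mul_pow, inv_pow, inv_mul_eq_div]
  rw [cap, hnorm, max_eq_right]
  rw [sub_nonneg, div_le_one (by positivity)]
  gcongr

lemma intervalIntegrable_logKernel {s t : ℝ} (hs : 1 ≤ s) (hst : s ≤ t) (z : E2) :
    IntervalIntegrable (fun τ ↦ τ⁻¹ * cap (τ⁻¹ • z) ^ 2) volume s t := by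
  have hinv : ContinuousOn (fun τ : ℝ ↦ τ⁻¹) (Icc s t) :=
    continuousOn_inv₀.mono fun _ hτ ↦ (one_pos.trans_le (hs.trans hτ.1)).ne'
  exact ContinuousOn.intervalIntegrable_of_Icc hst (hinv.mul
    ((continuous_cap.comp_continuousOn (hinv.smul continuousOn_const)).pow 2))

lemma logKernel_nonneg (hR : 1 ≤ R) (z : E2) : 0 ≤ logKernel R z :=
  intervalIntegral.integral_nonneg hR fun _ hτ ↦
    mul_nonneg (inv_nonneg.mpr (zero_le_one.trans hτ.1)) (sq_nonneg _)

lemma logKernel_eq_zero_of_le (hR : 1 ≤ R) (hz : R ≤ max 1 ‖z‖) : logKernel R z = 0 := by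
  rcases le_max_iff.mp hz with h1 | hz
  · rw [logKernel, le_antisymm h1 hR, intervalIntegral.integral_same]
  · have hzero : ∀ τ ∈ uIcc 1 R, τ⁻¹ * cap (τ⁻¹ • z) ^ 2 = 0 := by
      intro τ hτ
      rw [uIcc_of_le hR] at hτ
      simp [cap_inv_smul_of_le_norm (one_pos.trans_le hτ.1) (hτ.2.trans hz)]
    rw [logKernel, intervalIntegral.integral_congr hzero, intervalIntegral.integral_zero]

lemma logKernel_eq_integral_max (hR : max 1 ‖z‖ ≤ R) :
    logKernel R z = ∫ τ in max 1 ‖z‖..R, τ⁻¹ * cap (τ⁻¹ • z) ^ 2 := by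
  have hm : logKernel (max 1 ‖z‖) z = 0 := logKernel_eq_zero_of_le (le_max_left _ _) le_rfl
  rw [logKernel] at hm
  rw [logKernel, ← intervalIntegral.integral_add_adjacent_intervals
    (intervalIntegrable_logKernel le_rfl (le_max_left 1 ‖z‖) z)
    (intervalIntegrable_logKernel (le_max_left _ _) hR z), hm, zero_add]

lemma posLog_div_max_eq (hR : max 1 ‖z‖ ≤ R) : log⁺ (R / max 1 ‖z‖) = log (R / max 1 ‖z‖) := by
  have hm : 0 < max 1 ‖z‖ := by positivity
  refine posLog_eq_log ((one_le_div hm).mpr hR |>.trans (le_abs_self _))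

lemma logKernel_le_posLog (hR : 1 ≤ R) (z : E2) : logKernel R z ≤ log⁺ (R / max 1 ‖z‖) := by
  rcases le_total R (max 1 ‖z‖) with hz | hz
  · rw [logKernel_eq_zero_of_le hR hz]
    exact posLog_nonneg
  have hm : 0 < max 1 ‖z‖ := by positivity
  rw [logKernel_eq_integral_max hz, posLog_div_max_eq hz,
    ← integral_inv_of_pos hm (hm.trans_le hz)]
  refine intervalIntegral.integral_mono_on hz
    (intervalIntegrable_logKernel (le_max_left _ _) hz z) ?_ fun τ hτ ↦ ?_
  · exact ContinuousOn.intervalIntegrable_of_Icc hz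
      (continuousOn_inv₀.mono fun _ hτ ↦ (hm.trans_le hτ.1).ne')
  · exact mul_le_of_le_one_right (inv_nonneg.mpr (hm.le.trans hτ.1))
      (pow_le_one₀ (cap_nonneg _) (cap_le_one _))

lemma integral_inv_sub_mul_inv_cube (a : ℝ) {m R : ℝ} (hm : 0 < m) (hmR : m ≤ R) :
    IntervalIntegrable (fun τ : ℝ ↦ τ⁻¹ - 2 * a * (τ ^ 3)⁻¹) volume m R ∧
      ∫ τ in m..R, (τ⁻¹ - 2 * a * (τ ^ 3)⁻¹)
        = log R - log m + a * ((R ^ 2)⁻¹ - (m ^ 2)⁻¹) := by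
  have hne : ∀ τ ∈ Icc m R, τ ≠ 0 := fun τ hτ ↦ (hm.trans_le hτ.1).ne'
  have hderiv : ∀ τ ∈ uIcc m R,
      HasDerivAt (fun τ ↦ log τ + a * (τ ^ 2)⁻¹) (τ⁻¹ - 2 * a * (τ ^ 3)⁻¹) τ := by
    intro τ hτ
    have hτ0 := hne τ (uIcc_of_le hmR ▸ hτ)
    refine ((hasDerivAt_log hτ0).add
      (((hasDerivAt_pow 2 τ).inv (pow_ne_zero 2 hτ0)).const_mul a)).congr_deriv ?_
    field_simp
    ring
  have hint : IntervalIntegrable (fun τ : ℝ ↦ τ⁻¹ - 2 * a * (τ ^ 3)⁻¹) volume m R :=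
    ContinuousOn.intervalIntegrable_of_Icc hmR <| (continuousOn_id.inv₀ hne).sub
      (continuousOn_const.mul ((continuousOn_pow 3).inv₀ fun τ hτ ↦ pow_ne_zero 3 (hne τ hτ)))
  refine ⟨hint, ?_⟩
  rw [intervalIntegral.integral_eq_sub_of_hasDerivAt hderiv hint]
  ring

lemma posLog_sub_one_le_logKernel (hR : 1 ≤ R) (z : E2) :
    log⁺ (R / max 1 ‖z‖) - 1 ≤ logKernel R z := by
  rcases le_total R (max 1 ‖z‖) with hz | hz
  · have hm : 0 < max 1 ‖z‖ := by positivity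
    rw [posLog_eq_zero_iff _ |>.mpr]
    · linarith [logKernel_nonneg hR z]
    · rw [abs_of_nonneg (by positivity)]
      exact (div_le_one hm).mpr hz
  set m := max 1 ‖z‖
  have hm : 0 < m := by positivity
  obtain ⟨hint, heq⟩ := integral_inv_sub_mul_inv_cube (‖z‖ ^ 2) hm hz
  have hratio : ‖z‖ ^ 2 * (m ^ 2)⁻¹ ≤ 1 := by
    rw [← div_eq_mul_inv, div_le_one (by positivity)]
    gcongr
    exact le_max_right _ _
  calc log⁺ (R / m) - 1 ≤ log R - log m + ‖z‖ ^ 2 * ((R ^ 2)⁻¹ - (m ^ 2)⁻¹) := by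
        rw [posLog_div_max_eq hz, log_div (hm.trans_le hz).ne' hm.ne']
        have : 0 ≤ ‖z‖ ^ 2 * (R ^ 2)⁻¹ := by positivity
        linarith
    _ = ∫ τ in m..R, (τ⁻¹ - 2 * ‖z‖ ^ 2 * (τ ^ 3)⁻¹) := heq.symm
    _ ≤ ∫ τ in m..R, τ⁻¹ * cap (τ⁻¹ • z) ^ 2 := by
        refine intervalIntegral.integral_mono_on hz hint
          (intervalIntegrable_logKernel (le_max_left _ _) hz z) fun τ hτ ↦ ?_
        have hτ0 := hm.trans_le hτ.1
        rw [cap_inv_smul_of_norm_le hτ0 ((le_max_right _ _).trans hτ.1)]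
        calc τ⁻¹ - 2 * ‖z‖ ^ 2 * (τ ^ 3)⁻¹ = τ⁻¹ * (1 - 2 * (‖z‖ ^ 2 / τ ^ 2)) := by
              field_simp
          _ ≤ τ⁻¹ * (1 - ‖z‖ ^ 2 / τ ^ 2) ^ 2 := by
              gcongr
              nlinarith [sq_nonneg (‖z‖ ^ 2 / τ ^ 2)]
    _ = logKernel R z := (logKernel_eq_integral_max hz).symm

variable {μ : Measure E2} [IsFiniteMeasure μ]

lemma integrable_prod_logKernel (x : E2) : Integrable
    (fun p : ℝ × E2 ↦ p.1⁻¹ * cap (p.1⁻¹ • (p.2 - x)) ^ 2)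
    ((volume.restrict (Ioc 1 R)).prod μ) := by
  have hmeas : Measurable fun p : ℝ × E2 ↦ p.1⁻¹ * cap (p.1⁻¹ • (p.2 - x)) ^ 2 := by
    have := continuous_cap.measurable
    fun_prop
  have hfst : ∀ᵐ p ∂(volume.restrict (Ioc (1 : ℝ) R)).prod μ, p.1 ∈ Ioc 1 R :=
    Measure.quasiMeasurePreserving_fst.ae (ae_restrict_mem measurableSet_Ioc)
  refine .of_bound hmeas.aestronglyMeasurable 1 ?_
  filter_upwards [hfst] with p hp
  rw [norm_of_nonneg (mul_nonneg (inv_nonneg.mpr (zero_le_one.trans hp.1.le)) (sq_nonneg _))]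
  exact mul_le_one₀ (inv_le_one_of_one_le₀ hp.1.le) (sq_nonneg _)
    (pow_le_one₀ (cap_nonneg _) (cap_le_one _))

lemma integrable_logKernel_sub (hR : 1 ≤ R) (x : E2) :
    Integrable (fun y ↦ logKernel R (y - x)) μ := by
  simp only [logKernel, intervalIntegral.integral_of_le hR]
  exact (integrable_prod_logKernel x).integral_prod_right

lemma integral_logKernel_sub (hR : 1 ≤ R) (x : E2) :
    ∫ y, logKernel R (y - x) ∂μ = ∫ τ in (1 : ℝ)..R, capMass μ x τ / τ := by
  simp only [logKernel, intervalIntegral.integral_of_le hR]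
  rw [← integral_integral_swap (integrable_prod_logKernel x)]
  simp only [capMass, integral_const_mul, div_eq_inv_mul]

lemma eventually_log_div_sub_add_le_one (S : ℝ) :
    ∀ᶠ R in atTop, log (R / (R - S)) + (1 - ((R - S) / R) ^ 4) * log R ≤ 1 := by
  have hratio : Tendsto (fun R ↦ S / R) atTop (𝓝 0) := tendsto_const_nhds.div_atTop tendsto_id
  have hlog : Tendsto (fun R ↦ -log (1 - S / R)) atTop (𝓝 0) := by
    have := ((hratio.const_sub 1).log (by simp)).neg
    simpa using this
  have hlogdiv : Tendsto (fun R ↦ 4 * S * (log R / R)) atTop (𝓝 0) := by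
    simpa using isLittleO_log_id_atTop.tendsto_div_nhds_zero.const_mul (4 * S)
  filter_upwards [hlog.eventually_le_const (by norm_num : (0 : ℝ) < 1 / 2),
    hlogdiv.eventually_le_const (by norm_num : (0 : ℝ) < 1 / 2),
    hratio.eventually_le_const two_pos, eventually_ge_atTop 1] with R h1 h2 h3 hR
  have hR0 : R ≠ 0 := by positivity
  have hquot : (R - S) / R = 1 - S / R := by rw [sub_div, div_self hR0]
  have hbernoulli := one_add_mul_le_pow (a := -(S / R)) (by linarith) 4
  rw [← inv_div, hquot, log_inv]
  calc -log (1 - S / R) + (1 - (1 - S / R) ^ 4) * log R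
      ≤ 1 / 2 + 4 * (S / R) * log R := by
        gcongr
        · exact log_nonneg hR
        · rw [← sub_eq_add_neg] at hbernoulli
          push_cast at hbernoulli
          linarith
    _ = 1 / 2 + 4 * S * (log R / R) := by ring
    _ ≤ 1 := by linarith

lemma logKernel_sub_mul_logKernel_le {S : ℝ} (hS : 0 ≤ S) (hSR : 1 ≤ R - S)
    (hR : log (R / (R - S)) + (1 - ((R - S) / R) ^ 4) * log R ≤ 1) (z w : E2) :
    logKernel R z - ((R - S) / R) ^ 4 * logKernel (R - S) w
      ≤ log⁺ (R / max 1 ‖z‖) - log⁺ (R / max 1 ‖w‖) + 2 := by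
  have hR0 : 0 < R := by linarith
  have hq : ((R - S) / R) ^ 4 ≤ 1 :=
    pow_le_one₀ (div_nonneg (by linarith) hR0.le) ((div_le_one hR0).mpr (by linarith))
  have hw : logKernel (R - S) w ≤ log R := by
    refine (logKernel_le_posLog hSR w).trans ?_
    rw [posLog_eq_log_max_one (by positivity)]
    refine log_le_log (by positivity) (max_le (by linarith) ((div_le_self ?_ ?_).trans ?_))
    · linarith
    · exact le_max_left _ _
    · linarith
  have hscale : log⁺ (R / max 1 ‖w‖) ≤ log (R / (R - S)) + log⁺ ((R - S) / max 1 ‖w‖) := by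
    rw [← posLog_eq_log ((one_le_div (by linarith : 0 < R - S)).mpr (by linarith) |>.trans
      (le_abs_self _))]
    refine le_of_eq_of_le (congrArg _ ?_) posLog_mul
    field_simp
  have hdefect : (1 - ((R - S) / R) ^ 4) * logKernel (R - S) w
      ≤ (1 - ((R - S) / R) ^ 4) * log R := mul_le_mul_of_nonneg_left hw (by linarith)
  linarith [logKernel_le_posLog (by linarith : 1 ≤ R) z, posLog_sub_one_le_logKernel hSR w]

end LogKernel

section Decay

variable {v : E2 → ℝ} {x y : E2} {R R' s₀ : ℝ}

lemma mul_cap_inv_smul_le (hR' : 0 < R') (hx : ‖x‖ + R' ≤ R) (y : E2) :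
    (R' / R) ^ 2 * cap (R'⁻¹ • y) ≤ cap (R⁻¹ • (y - x)) := by
  have hR : 0 < R := by linarith [norm_nonneg x]
  rcases le_total R' ‖y‖ with hy | hy
  · simpa [cap_inv_smul_of_le_norm hR' hy] using cap_nonneg _
  have hyx : ‖y - x‖ ≤ ‖y‖ + ‖x‖ := norm_sub_le _ _
  rw [cap_inv_smul_of_norm_le hR' hy, cap_inv_smul_of_norm_le hR (by linarith)]
  calc (R' / R) ^ 2 * (1 - ‖y‖ ^ 2 / R' ^ 2) = (R' ^ 2 - ‖y‖ ^ 2) / R ^ 2 := by field_simp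
    _ ≤ (R ^ 2 - ‖y - x‖ ^ 2) / R ^ 2 := by
        gcongr ?_ / _
        have : ‖y - x‖ ^ 2 ≤ (‖y‖ + (R - R')) ^ 2 := by gcongr; linarith
        nlinarith [mul_nonneg (sub_nonneg.mpr hy) (by linarith [norm_nonneg x] : 0 ≤ R - R')]
    _ = 1 - ‖y - x‖ ^ 2 / R ^ 2 := by field_simp

lemma capMean_le_mul_capMean_zero (hv : Continuous v) (hR' : 0 < R') (hx : ‖x‖ + R' ≤ R)
    (hv0 : ∀ y ∈ ball x R, v y ≤ 0) : capMean v x R ≤ (R' / R) ^ 4 * capMean v 0 R' := by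
  have hR : 0 < R := by linarith [norm_nonneg x]
  have hpt : ∀ y, v y * cap (R⁻¹ • (y - x)) ≤ (R' / R) ^ 2 * (v y * cap (R'⁻¹ • (y - 0))) := by
    intro y
    have hcap := mul_cap_inv_smul_le hR' hx y
    rw [sub_zero]
    by_cases hy : y ∈ ball x R
    · nlinarith [hv0 y hy]
    · have hRy : R ≤ ‖y - x‖ := by simpa [dist_eq_norm] using hy
      have hR'y : R' ≤ ‖y‖ := by linarith [norm_sub_le y x]
      simp [cap_inv_smul_of_le_norm hR hRy, cap_inv_smul_of_le_norm hR' hR'y]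
  have hint := integral_mono (integrable_mul_cap_inv_smul_sub hv x hR.ne')
    ((integrable_mul_cap_inv_smul_sub hv 0 hR'.ne').const_mul _) hpt
  rw [integral_const_mul, integral_mul_cap_inv_smul_sub v x hR.ne',
    integral_mul_cap_inv_smul_sub v 0 hR'.ne'] at hint
  calc capMean v x R = 2 / (π * R ^ 2) * (π / 2 * (R ^ 2 * capMean v x R)) := by field_simp
    _ ≤ 2 / (π * R ^ 2) * ((R' / R) ^ 2 * (π / 2 * (R' ^ 2 * capMean v 0 R'))) := by gcongr
    _ = (R' / R) ^ 4 * capMean v 0 R' := by field_simp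

lemma capMean_nonpos (hv0 : ∀ y ∈ ball x 1, v y ≤ 0) : capMean v x 1 ≤ 0 := by
  refine mul_nonpos_of_nonneg_of_nonpos (by positivity) (integral_nonpos fun z ↦ ?_)
  rcases le_or_gt 1 ‖z‖ with hz | hz
  · simp [cap_of_one_le_norm hz]
  · exact mul_nonpos_of_nonpos_of_nonneg (hv0 _ (by simpa using hz)) (cap_nonneg z)

lemma integrable_log_one_add_div {μ : Measure E2} [IsFiniteMeasure μ] (x : E2) :
    Integrable (fun y ↦ log (1 + ‖x‖ / max 1 ‖y - x‖)) μ := by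
  have hmeas : Measurable fun y : E2 ↦ log (1 + ‖x‖ / max 1 ‖y - x‖) := by fun_prop
  refine .of_bound hmeas.aestronglyMeasurable (log (1 + ‖x‖)) (.of_forall fun y ↦ ?_)
  have hquot : 0 ≤ ‖x‖ / max 1 ‖y - x‖ := by positivity
  rw [norm_of_nonneg (log_nonneg (by linarith))]
  gcongr
  exact div_le_self (norm_nonneg x) (le_max_left _ _)

lemma posLog_div_sub_posLog_div_le (hR : 0 < R) (x y : E2) :
    log⁺ (R / max 1 ‖y - x‖) - log⁺ (R / max 1 ‖y‖) ≤ log (1 + ‖x‖ / max 1 ‖y - x‖) := by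
  have hyx : 0 < max 1 ‖y - x‖ := by positivity
  have hquot : max 1 ‖y‖ / max 1 ‖y - x‖ ≤ 1 + ‖x‖ / max 1 ‖y - x‖ := by
    rw [div_le_iff₀ hyx, add_mul, one_mul, div_mul_cancel₀ _ hyx.ne']
    refine max_le ?_ ?_
    · linarith [le_max_left 1 ‖y - x‖, norm_nonneg x]
    · linarith [le_max_right 1 ‖y - x‖, norm_le_norm_sub_add y x]
  rw [sub_le_iff_le_add]
  calc log⁺ (R / max 1 ‖y - x‖)
      = log⁺ (max 1 ‖y‖ / max 1 ‖y - x‖ * (R / max 1 ‖y‖)) := by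
        congr 1
        field_simp
    _ ≤ log⁺ (max 1 ‖y‖ / max 1 ‖y - x‖) + log⁺ (R / max 1 ‖y‖) := posLog_mul
    _ ≤ log (1 + ‖x‖ / max 1 ‖y - x‖) + log⁺ (R / max 1 ‖y‖) := by
        gcongr
        rw [posLog_eq_log_max_one (by positivity)]
        refine log_le_log (by positivity) (max_le ?_ hquot)
        exact le_add_of_nonneg_right (by positivity)

lemma posLog_div_sub_posLog_div_le_of_norm_lt (hs₀ : 1 ≤ s₀) (hy : ‖y‖ < s₀)
    (hx : 2 * s₀ ≤ ‖x‖) (hxR : ‖x‖ ≤ R) :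
    log⁺ (R / max 1 ‖y - x‖) - log⁺ (R / max 1 ‖y‖) ≤ log (2 * s₀) - log ‖x‖ := by
  have hx0 : 0 < ‖x‖ := by linarith
  have hfar : ‖x‖ / 2 ≤ max 1 ‖y - x‖ :=
    le_max_of_le_right (by linarith [norm_sub_norm_le x y, norm_sub_rev x y])
  have hnear : max 1 ‖y‖ ≤ s₀ := max_le hs₀ hy.le
  have hupper : log⁺ (R / max 1 ‖y - x‖) ≤ log (R / (‖x‖ / 2)) := by
    rw [posLog_eq_log_max_one (div_nonneg (hx0.le.trans hxR) (by positivity))]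
    refine log_le_log (by positivity) (max_le ?_ ?_)
    · rw [one_le_div (by positivity)]
      linarith
    · gcongr
      linarith
  have hlower : log (R / s₀) ≤ log⁺ (R / max 1 ‖y‖) := by
    refine le_trans (log_le_log (div_pos (hx0.trans_le hxR) (by positivity)) ?_) (le_max_right _ _)
    gcongr
    linarith
  rw [log_div (by linarith) (by positivity), log_div hx0.ne' two_ne_zero] at hupper
  rw [log_div (by linarith) (by positivity)] at hlower
  rw [log_mul two_ne_zero (by positivity)]
  linarith

lemma integral_logKernel_sub_mul_le {S : ℝ} {μ : Measure E2} [IsFiniteMeasure μ] (hs₀ : 1 ≤ s₀)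
    (hSR : 1 ≤ R - S) (hR : log (R / (R - S)) + (1 - ((R - S) / R) ^ 4) * log R ≤ 1)
    (hx : 2 * s₀ ≤ ‖x‖) (hxS : ‖x‖ ≤ S) :
    ∫ y, (logKernel R (y - x) - ((R - S) / R) ^ 4 * logKernel (R - S) y) ∂μ
      ≤ 2 * μ.real univ - (log ‖x‖ - log (2 * s₀)) * μ.real (ball 0 s₀)
        + ∫ y in (ball 0 s₀)ᶜ, log (1 + ‖x‖ / max 1 ‖y - x‖) ∂μ := by
  set K : E2 → ℝ := fun y ↦ logKernel R (y - x) - ((R - S) / R) ^ 4 * logKernel (R - S) y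
  have hS : 0 ≤ S := (norm_nonneg x).trans hxS
  have hKle := fun y ↦ logKernel_sub_mul_logKernel_le hS hSR hR (y - x) y
  have hKint : Integrable K μ := by
    have hK0 := integrable_logKernel_sub (μ := μ) hSR 0
    simp only [sub_zero] at hK0
    exact (integrable_logKernel_sub (by linarith) x).sub (hK0.const_mul _)
  have hinner : ∫ y in ball 0 s₀, K y ∂μ ≤ (log (2 * s₀) - log ‖x‖ + 2) * μ.real (ball 0 s₀) := by
    rw [mul_comm, ← smul_eq_mul, ← setIntegral_const]
    refine setIntegral_mono_on hKint.integrableOn (integrable_const _).integrableOn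
      measurableSet_ball fun y hy ↦ (hKle y).trans ?_
    linarith [posLog_div_sub_posLog_div_le_of_norm_lt hs₀ (mem_ball_zero_iff.mp hy) hx
      (by linarith : ‖x‖ ≤ R)]
  have hlogint := integrable_log_one_add_div (μ := μ) x
  have houter : ∫ y in (ball 0 s₀)ᶜ, K y ∂μ
      ≤ ∫ y in (ball 0 s₀)ᶜ, log (1 + ‖x‖ / max 1 ‖y - x‖) ∂μ + 2 * μ.real (ball 0 s₀)ᶜ := by
    rw [mul_comm, ← smul_eq_mul, ← setIntegral_const,
      ← integral_add hlogint.integrableOn (integrable_const _).integrableOn]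
    refine setIntegral_mono_on hKint.integrableOn
      (hlogint.add (integrable_const _)).integrableOn
      measurableSet_ball.compl fun y _ ↦ (hKle y).trans ?_
    exact add_le_add_left (posLog_div_sub_posLog_div_le (by linarith) x y) 2
  rw [← integral_add_compl measurableSet_ball hKint (s := ball 0 s₀),
    ← measureReal_add_measureReal_compl (μ := μ) (measurableSet_ball (x := 0) (ε := s₀))]
  linarith

namespace IsBlowUpProfile

variable {b C₀ L S κ : ℝ}

lemma two_pi_mul_apply_le_integral_logKernel (h : IsBlowUpProfile b C₀ L v) (hSR : 1 ≤ R - S)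
    (hL : R + S ≤ L) (hx : ‖x‖ ≤ S) :
    2 * π * v x ≤ π * b / 2 + ∫ y, (logKernel R (y - x)
      - ((R - S) / R) ^ 4 * logKernel (R - S) y) ∂rieszMeasure v L := by
  have := isFiniteMeasure_rieszMeasure (L := L) h.contDiff
  have hS : 0 ≤ S := (norm_nonneg x).trans hx
  have hR1 : 1 ≤ R := by linarith
  have hball : ball x R ⊆ ball 0 L := ball_subset_ball' (by rw [dist_zero_right]; linarith)
  have hmean_x := capMean_sub_capMean h.contDiff h.neg_lapl_nonneg one_pos hR1 hball
  have hmean_0 := capMean_sub_capMean h.contDiff h.neg_lapl_nonneg one_pos hSR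
    (ball_subset_ball (by linarith))
  rw [← integral_logKernel_sub hR1] at hmean_x
  rw [← integral_logKernel_sub hSR] at hmean_0
  have hone_x := h.sub_le_capMean_one ((ball_subset_ball hR1).trans hball)
  have hone_0 : capMean v 0 1 ≤ 0 :=
    capMean_nonpos fun y hy ↦ h.nonpos y (ball_subset_ball (by linarith) hy)
  have hdom := capMean_le_mul_capMean_zero (x := x) h.contDiff.continuous (by linarith : 0 < R - S)
    (by linarith) fun y hy ↦ h.nonpos y (hball hy)
  have hK0 := integrable_logKernel_sub (μ := rieszMeasure v L) hSR 0
  simp only [sub_zero] at hmean_0 hK0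
  rw [integral_sub (integrable_logKernel_sub hR1 x) (hK0.const_mul _), integral_const_mul]
  set a := ∫ y, logKernel R (y - x) ∂rieszMeasure v L
  set c := ∫ y, logKernel (R - S) y ∂rieszMeasure v L
  set q := ((R - S) / R) ^ 4
  have hq : 0 ≤ q := by positivity
  calc 2 * π * v x ≤ 2 * π * (b / 4 + (2 * π)⁻¹ * a + q * (0 - (2 * π)⁻¹ * c)) := by
        gcongr
        have : capMean v 0 (R - S) ≤ 0 - (2 * π)⁻¹ * c := by linarith
        linarith [mul_le_mul_of_nonneg_left this hq]
    _ = π * b / 2 + (a - q * c) := by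
        field_simp
        ring

lemma two_pi_mul_apply_le (h : IsBlowUpProfile b C₀ L v) (hs₀ : 1 ≤ s₀) (hSR : 1 ≤ R - S)
    (hR : log (R / (R - S)) + (1 - ((R - S) / R) ^ 4) * log R ≤ 1) (hL : R + S ≤ L)
    (hκ : 2 * π * κ ≤ (rieszMeasure v L).real (ball 0 s₀)) (hx : 2 * s₀ ≤ ‖x‖) (hxS : ‖x‖ ≤ S) :
    2 * π * v x ≤ π * b / 2 + 2 * (rieszMeasure v L).real univ
      - 2 * π * κ * (log ‖x‖ - log (2 * s₀))
      + ∫ y in (ball 0 s₀)ᶜ, log (1 + ‖x‖ / max 1 ‖y - x‖) ∂rieszMeasure v L := by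
  have := isFiniteMeasure_rieszMeasure (L := L) h.contDiff
  have hlog : 0 ≤ log ‖x‖ - log (2 * s₀) := sub_nonneg.mpr (log_le_log (by positivity) hx)
  have hpot := h.two_pi_mul_apply_le_integral_logKernel hSR hL hxS
  have hkernel := integral_logKernel_sub_mul_le (μ := rieszMeasure v L) hs₀ hSR hR hx hxS
  linarith [mul_le_mul_of_nonneg_right hκ hlog]

end IsBlowUpProfile

end Decay

/-- The kernel, integrable over the plane when `2 < β`, whose superpositions dominate the decay of
blow-up profiles. -/
noncomputable def decayKernel (β : ℝ) (z : E2) : ℝ := max 1 ‖z‖ ^ (-β)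

section DecayKernel

variable {β : ℝ} {μ : Measure E2}

lemma continuous_decayKernel : Continuous (decayKernel β) :=
  (continuous_const.max continuous_norm).rpow_const fun z ↦ .inl (by positivity)

lemma decayKernel_nonneg (z : E2) : 0 ≤ decayKernel β z := by
  unfold decayKernel
  positivity

lemma decayKernel_le_one (hβ : 0 ≤ β) (z : E2) : decayKernel β z ≤ 1 :=
  rpow_le_one_of_one_le_of_nonpos (le_max_left _ _) (by linarith)

lemma integrable_decayKernel (hβ : 2 < β) : Integrable (decayKernel β) := by
  have hdim : (Module.finrank ℝ E2 : ℝ) < β := by simpa using hβ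
  refine ((integrable_one_add_norm hdim).const_mul (2 ^ β)).mono'
    continuous_decayKernel.aestronglyMeasurable (.of_forall fun z ↦ ?_)
  rw [norm_of_nonneg (decayKernel_nonneg z)]
  calc max 1 ‖z‖ ^ (-β) ≤ ((1 + ‖z‖) / 2) ^ (-β) :=
        rpow_le_rpow_of_nonpos (by positivity)
          (by linarith [le_max_left 1 ‖z‖, le_max_right 1 ‖z‖]) (by linarith)
    _ = 2 ^ β * (1 + ‖z‖) ^ (-β) := by
        rw [div_rpow (by positivity) two_pos.le, rpow_neg two_pos.le, div_inv_eq_mul, mul_comm]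

/-- The kernels `decayKernel β` based at the origin and at the points of `μ`, superposed. -/
noncomputable def decayPotential (β : ℝ) (μ : Measure E2) (x : E2) : ℝ :=
  decayKernel β x + ∫ y, decayKernel β (y - x) ∂μ

lemma decayPotential_nonneg (x : E2) : 0 ≤ decayPotential β μ x :=
  add_nonneg (decayKernel_nonneg x) (integral_nonneg fun _ ↦ decayKernel_nonneg _)

variable [IsFiniteMeasure μ]

lemma integrable_prod_decayKernel (hβ : 2 < β) :
    Integrable (fun p : E2 × E2 ↦ decayKernel β (p.2 - p.1)) (volume.prod μ) := by
  have hmeas : Continuous fun p : E2 × E2 ↦ decayKernel β (p.2 - p.1) :=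
    continuous_decayKernel.comp (continuous_snd.sub continuous_fst)
  refine (integrable_prod_iff' hmeas.aestronglyMeasurable).mpr
    ⟨.of_forall fun y ↦ (integrable_decayKernel hβ).comp_sub_left y, ?_⟩
  simp only [integral_sub_left_eq_self (fun z ↦ ‖decayKernel β z‖) volume]
  exact integrable_const _

lemma integrable_decayPotential (hβ : 2 < β) : Integrable (decayPotential β μ) :=
  (integrable_decayKernel hβ).add (integrable_prod_decayKernel hβ).integral_prod_left

lemma integral_decayPotential (hβ : 2 < β) :
    ∫ x, decayPotential β μ x = (1 + μ.real univ) * ∫ z, decayKernel β z := by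
  simp only [decayPotential]
  rw [integral_add (integrable_decayKernel hβ) (integrable_prod_decayKernel hβ).integral_prod_left,
    integral_integral_swap (integrable_prod_decayKernel hβ)]
  simp only [integral_sub_left_eq_self (decayKernel β) volume, integral_const, smul_eq_mul]
  ring

lemma one_add_rpow_le {t : ℝ} (ht : 0 ≤ t) (hβ : 0 ≤ β) : (1 + t) ^ β ≤ 2 ^ β * (1 + t ^ β) :=
  calc (1 + t) ^ β ≤ (2 * max 1 t) ^ β := by
        gcongr
        linarith [le_max_left 1 t, le_max_right 1 t]
    _ = 2 ^ β * max 1 t ^ β := mul_rpow two_pos.le (by positivity)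
    _ ≤ 2 ^ β * (1 + t ^ β) := by
        gcongr
        rcases max_choice 1 t with h | h <;> rw [h]
        · rw [one_rpow]
          linarith [rpow_nonneg ht β]
        · linarith

lemma exp_mul_log_one_add_div_le (hβ : 0 ≤ β) (x z : E2) :
    exp (β * log (1 + ‖x‖ / max 1 ‖z‖)) ≤ 2 ^ β * (1 + ‖x‖ ^ β * decayKernel β z) := by
  have hm : 0 < max 1 ‖z‖ := by positivity
  rw [mul_comm, exp_mul, exp_log (by positivity)]
  refine (one_add_rpow_le (by positivity) hβ).trans_eq ?_
  rw [div_rpow (norm_nonneg x) hm.le, decayKernel, rpow_neg hm.le, div_eq_mul_inv]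

lemma exp_inv_mul_integral_le {α : Type*} [MeasurableSpace α] {μ : Measure α} [IsFiniteMeasure μ]
    {g : α → ℝ} {c : ℝ} (hc : 0 < c) (hμ : μ.real univ ≤ c) (hg : Integrable g μ)
    (hexp : Integrable (fun x ↦ exp (g x)) μ) :
    exp (c⁻¹ * ∫ x, g x ∂μ) ≤ c⁻¹ * ∫ x, exp (g x) ∂μ + 1 := by
  have hw : ∫ _, c⁻¹ ∂μ ≤ 1 := by
    rw [integral_const, smul_eq_mul]
    exact mul_inv_le_one_of_le₀ hμ hc.le
  have h := exp_integral_mul_le (fun _ ↦ (inv_pos.mpr hc).le) (integrable_const _) hw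
    (hg.mul_const _) (hexp.mul_const _)
  have hw0 : 0 ≤ ∫ _, c⁻¹ ∂μ := integral_nonneg fun _ ↦ (inv_pos.mpr hc).le
  rw [integral_mul_const, integral_mul_const, mul_comm (∫ x, g x ∂μ),
    mul_comm (∫ x, exp (g x) ∂μ)] at h
  linarith

lemma integrable_decayKernel_sub (hβ : 0 ≤ β) (x : E2) :
    Integrable (fun y ↦ decayKernel β (y - x)) μ := by
  refine .of_bound (continuous_decayKernel.comp (by fun_prop)).aestronglyMeasurable 1
    (.of_forall fun y ↦ ?_)
  rw [norm_of_nonneg (decayKernel_nonneg _)]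
  exact decayKernel_le_one hβ _

lemma exp_integral_log_one_add_div_le (hβ : 1 ≤ β) (hμ : μ.real univ ≤ 2 * π * β) (x : E2) :
    exp ((2 * π)⁻¹ * ∫ y, log (1 + ‖x‖ / max 1 ‖y - x‖) ∂μ)
      ≤ 2 ^ (β + 1) * (1 + ‖x‖ ^ β * ∫ y, decayKernel β (y - x) ∂μ) := by
  have hβ0 : 0 < β := by linarith
  have hc : 1 ≤ 2 * π * β := by nlinarith [pi_gt_three]
  have hpt := fun y ↦ exp_mul_log_one_add_div_le hβ0.le x (y - x)
  have hker := integrable_decayKernel_sub (μ := μ) hβ0.le x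
  have hdom : Integrable (fun y ↦ 2 ^ β * (1 + ‖x‖ ^ β * decayKernel β (y - x))) μ :=
    ((integrable_const 1).add (hker.const_mul _)).const_mul _
  have hexp : Integrable (fun y ↦ exp (β * log (1 + ‖x‖ / max 1 ‖y - x‖))) μ := by
    refine hdom.mono' (Measurable.aestronglyMeasurable (by fun_prop)) (.of_forall fun y ↦ ?_)
    rw [norm_of_nonneg (exp_pos _).le]
    exact hpt y
  have hjensen := exp_inv_mul_integral_le (by positivity) hμ
    ((integrable_log_one_add_div x).const_mul β) hexp
  have hmono := integral_mono hexp hdom hpt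
  rw [integral_const_mul, integral_add (integrable_const 1) (hker.const_mul _),
    integral_const_mul, integral_const, smul_eq_mul, mul_one] at hmono
  set I := ‖x‖ ^ β * ∫ y, decayKernel β (y - x) ∂μ
  have hI : 0 ≤ I := mul_nonneg (by positivity) (integral_nonneg fun _ ↦ decayKernel_nonneg _)
  have hpow : (1 : ℝ) ≤ 2 ^ β := one_le_rpow one_le_two hβ0.le
  calc exp ((2 * π)⁻¹ * ∫ y, log (1 + ‖x‖ / max 1 ‖y - x‖) ∂μ)
      = exp ((2 * π * β)⁻¹ * ∫ y, β * log (1 + ‖x‖ / max 1 ‖y - x‖) ∂μ) := by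
        rw [integral_const_mul]
        field_simp
    _ ≤ (2 * π * β)⁻¹ * (2 ^ β * (μ.real univ + I)) + 1 := hjensen.trans (by gcongr)
    _ ≤ (2 * π * β)⁻¹ * (2 ^ β * (2 * π * β * (1 + I))) + 2 ^ β * (1 + I) := by
        gcongr
        · nlinarith
        · nlinarith
    _ = 2 ^ (β + 1) * (1 + I) := by
        rw [rpow_add_one two_ne_zero]
        field_simp
        ring

end DecayKernel

namespace IsBlowUpProfile

variable {b C₀ L S R κ β s₀ : ℝ} {v : E2 → ℝ} {x : E2}

lemma rpow_mul_exp_le (h : IsBlowUpProfile b C₀ L v) (hs₀ : 1 ≤ s₀) (hSR : 1 ≤ R - S)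
    (hR : log (R / (R - S)) + (1 - ((R - S) / R) ^ 4) * log R ≤ 1) (hL : R + S ≤ L)
    (hβ : 1 ≤ β) (hκ : 2 * π * κ ≤ (rieszMeasure v L).real (ball 0 s₀))
    (hM : (rieszMeasure v L).real univ ≤ 2 * π * (κ + β)) (hx : 2 * s₀ ≤ ‖x‖) (hxS : ‖x‖ ≤ S) :
    ‖x‖ ^ (κ - β) * exp (v x)
      ≤ exp (b / 4 + 2 * (κ + β)) * (2 * s₀) ^ κ * 2 ^ (β + 1)
        * decayPotential β ((rieszMeasure v L).restrict (ball 0 s₀)ᶜ) x := by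
  have := isFiniteMeasure_rieszMeasure (L := L) h.contDiff
  set μ := rieszMeasure v L
  have hx0 : 0 < ‖x‖ := by linarith
  have hν : (μ.restrict (ball 0 s₀)ᶜ).real univ ≤ 2 * π * β := by
    have huniv := measureReal_add_measureReal_compl (μ := μ) (measurableSet_ball (x := 0) (ε := s₀))
    rw [measureReal_restrict_apply_univ]
    linarith
  have hexp := exp_integral_log_one_add_div_le hβ hν x
  have hpot := h.two_pi_mul_apply_le hs₀ hSR hR hL hκ hx hxS
  set Λ := ∫ y in (ball 0 s₀)ᶜ, log (1 + ‖x‖ / max 1 ‖y - x‖) ∂μ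
  set I := ∫ y in (ball 0 s₀)ᶜ, decayKernel β (y - x) ∂μ with hI
  have hvx : v x ≤ b / 4 + 2 * (κ + β) + log (2 * s₀) * κ - log ‖x‖ * κ + (2 * π)⁻¹ * Λ := by
    calc v x = (2 * π)⁻¹ * (2 * π * v x) := by field_simp
      _ ≤ (2 * π)⁻¹ * (π * b / 2 + 2 * (2 * π * (κ + β))
          - 2 * π * κ * (log ‖x‖ - log (2 * s₀)) + Λ) := by
        gcongr
        linarith
      _ = _ := by
        field_simp
        ring
  have hker : ‖x‖ ^ (-β) = decayKernel β x := by
    rw [decayKernel, max_eq_right (by linarith)]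
  calc ‖x‖ ^ (κ - β) * exp (v x)
      ≤ ‖x‖ ^ (κ - β) * (exp (b / 4 + 2 * (κ + β)) * (2 * s₀) ^ κ / ‖x‖ ^ κ
          * (2 ^ (β + 1) * (1 + ‖x‖ ^ β * I))) := by
        gcongr
        refine (exp_le_exp.mpr hvx).trans ?_
        rw [exp_add, exp_sub, exp_add (b / 4 + _), ← rpow_def_of_pos (by positivity),
          ← rpow_def_of_pos hx0]
        gcongr
    _ = exp (b / 4 + 2 * (κ + β)) * (2 * s₀) ^ κ * 2 ^ (β + 1)
        * decayPotential β (μ.restrict (ball 0 s₀)ᶜ) x := by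
        rw [decayPotential, ← hI, ← hker, rpow_sub hx0, rpow_neg hx0.le]
        field_simp

end IsBlowUpProfile

section LogMoment

lemma setIntegral_mono_of_nonneg {α : Type*} [MeasurableSpace α] {μ : Measure α} {s : Set α}
    {f g : α → ℝ} (hs : MeasurableSet s) (hg : IntegrableOn g s μ) (hg0 : ∀ x ∈ s, 0 ≤ g x)
    (hfg : ∀ x ∈ s, f x ≤ g x) : ∫ x in s, f x ∂μ ≤ ∫ x in s, g x ∂μ := by
  by_cases hf : IntegrableOn f s μ
  · exact setIntegral_mono_on hf hg hs hfg
  · rw [integral_undef hf]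
    exact setIntegral_nonneg hs hg0

variable {b C₀ L S κ β s₀ D : ℝ} {v : E2 → ℝ}

namespace IsBlowUpProfile

lemma log_norm_mul_neg_lapl_le (h : IsBlowUpProfile b C₀ L v) (hs₀ : 1 ≤ s₀) (hκ : β < κ)
    {x : E2} (hxL : x ∈ ball 0 L) {A : ℝ} (hA0 : 0 ≤ A)
    (hA : 2 * s₀ ≤ ‖x‖ → ‖x‖ ^ (κ - β) * exp (v x) ≤ A) :
    log ‖x‖ * -lapl v x ≤ log (2 * s₀) * -lapl v x + b / (κ - β) * A := by
  have hf0 := h.neg_lapl_nonneg x hxL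
  have hb := h.coeff_nonneg (pos_of_mem_ball hxL)
  have hκβ : 0 < κ - β := sub_pos.mpr hκ
  have hlog0 : 0 ≤ log (2 * s₀) := log_nonneg (by linarith)
  rcases le_total (2 * s₀) ‖x‖ with hx | hx
  · calc log ‖x‖ * -lapl v x ≤ ‖x‖ ^ (κ - β) / (κ - β) * (b * exp (v x)) := by
          gcongr
          · exact log_le_rpow_div (norm_nonneg x) hκβ
          · exact h.neg_lapl_le x hxL
      _ = b / (κ - β) * (‖x‖ ^ (κ - β) * exp (v x)) := by ring
      _ ≤ b / (κ - β) * A := by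
          gcongr
          exact hA hx
      _ ≤ log (2 * s₀) * -lapl v x + b / (κ - β) * A :=
          le_add_of_nonneg_left (mul_nonneg hlog0 hf0)
  · have hlog : log ‖x‖ ≤ log (2 * s₀) := by
      rcases (norm_nonneg x).eq_or_lt with hx0 | hx0
      · rwa [← hx0, log_zero]
      · exact log_le_log hx0 hx
    exact (mul_le_mul_of_nonneg_right hlog hf0).trans (le_add_of_nonneg_right (by positivity))

lemma setIntegral_log_mul_le (h : IsBlowUpProfile b C₀ L v) (hs₀ : 1 ≤ s₀) (hβ : 2 < β)
    (hκ : β < κ) (hL : 0 < L) (hSL : S ≤ L) (hD : 0 ≤ D)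
    (hM : (rieszMeasure v L).real univ ≤ 2 * π * (κ + β))
    (hdecay : ∀ x, 2 * s₀ ≤ ‖x‖ → ‖x‖ ≤ S → ‖x‖ ^ (κ - β) * exp (v x)
      ≤ D * decayPotential β ((rieszMeasure v L).restrict (ball 0 s₀)ᶜ) x) :
    ∫ x in ball 0 S, log ‖x‖ * -lapl v x ≤ log (2 * s₀) * (2 * π * (κ + β))
      + b / (κ - β) * (D * ((1 + 2 * π * (κ + β)) * ∫ z, decayKernel β z)) := by
  have := isFiniteMeasure_rieszMeasure (L := L) h.contDiff
  have hb := h.coeff_nonneg hL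
  have : 0 < κ - β := sub_pos.mpr hκ
  have hlog : 0 ≤ log (2 * s₀) := log_nonneg (by linarith)
  set P := decayPotential β ((rieszMeasure v L).restrict (ball 0 s₀)ᶜ)
  have hP0 : ∀ x, 0 ≤ P x := decayPotential_nonneg
  have hP : Integrable P := integrable_decayPotential hβ
  have hPS : ∫ x in ball 0 S, P x ≤ (1 + 2 * π * (κ + β)) * ∫ z, decayKernel β z := by
    refine (setIntegral_le_integral hP (.of_forall hP0)).trans
      ((integral_decayPotential hβ).trans_le ?_)
    rw [measureReal_restrict_apply_univ]
    gcongr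
    · exact integral_nonneg fun z ↦ decayKernel_nonneg z
    · exact (measureReal_mono (subset_univ _)).trans hM
  have hf : IntegrableOn (fun x ↦ -lapl v x) (ball 0 S) :=
    ((continuous_lapl h.contDiff).neg.locallyIntegrable.integrableOn_isCompact
      (isCompact_closedBall 0 S)).mono_set ball_subset_closedBall
  have hfS : ∫ x in ball 0 S, -lapl v x ≤ 2 * π * (κ + β) := by
    rw [← real_rieszMeasure h.contDiff h.neg_lapl_nonneg hSL]
    exact (measureReal_mono (subset_univ _)).trans hM
  have hsum := (hf.const_mul (log (2 * s₀))).add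
    ((hP.integrableOn.const_mul D).const_mul (b / (κ - β)))
  calc ∫ x in ball 0 S, log ‖x‖ * -lapl v x
      ≤ ∫ x in ball 0 S, (log (2 * s₀) * -lapl v x + b / (κ - β) * (D * P x)) := by
        refine setIntegral_mono_of_nonneg measurableSet_ball hsum (fun x hx ↦ ?_) fun x hx ↦ ?_
        · have := h.neg_lapl_nonneg x (ball_subset_ball hSL hx)
          have := hP0 x
          positivity
        · exact h.log_norm_mul_neg_lapl_le hs₀ hκ (ball_subset_ball hSL hx)
            (mul_nonneg hD (hP0 x)) fun hx2 ↦ hdecay x hx2 (mem_ball_zero_iff.mp hx).le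
    _ = (log (2 * s₀) * ∫ x in ball 0 S, -lapl v x)
        + b / (κ - β) * (D * ∫ x in ball 0 S, P x) := by
        rw [integral_add (hf.const_mul _) ((hP.integrableOn.const_mul D).const_mul _)]
        simp only [integral_const_mul]
    _ ≤ _ := by gcongr

-- The mass allowed outside `ball 0 s₀` is kept below `2 * π * β` with `2 < β < κ`, so that the
-- decay rate `κ` won from `ball 0 s₀` beats the growth of the remaining potential.
theorem exists_setIntegral_log_mul_le (b C₀ : ℝ) :
    ∃ C, ∃ ε > 0, ∀ S, ∃ L₀, ∀ L ≥ L₀, ∀ v, IsBlowUpProfile b C₀ L v →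
      ∫ x in ball 0 L, -lapl v x ≤ 8 * π + ε →
      ∫ x in ball 0 S, log ‖x‖ * -lapl v x ≤ C := by
  obtain ⟨κ, hκ, s₀, hs₀, hmass⟩ := exists_le_real_rieszMeasure b C₀
  set β := (2 + κ) / 2 with hβ
  set D := exp (b / 4 + 2 * (κ + β)) * (2 * s₀) ^ κ * 2 ^ (β + 1)
  refine ⟨log (2 * s₀) * (2 * π * (κ + β)) + b / (κ - β) * (D * ((1 + 2 * π * (κ + β)) *
    ∫ z, decayKernel β z)), 3 * π * (κ - 2), mul_pos (by positivity) (by linarith), fun S ↦ ?_⟩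
  obtain ⟨R, hR, hRS⟩ := ((eventually_log_div_sub_add_le_one S).and
    (eventually_ge_atTop (S + 1))).exists
  refine ⟨max s₀ (R + S), fun L hL v h hM ↦ ?_⟩
  have hs₀L : s₀ ≤ L := (le_max_left _ _).trans hL
  have hRSL : R + S ≤ L := (le_max_right _ _).trans hL
  have hMuniv : (rieszMeasure v L).real univ ≤ 2 * π * (κ + β) := by
    rw [real_rieszMeasure_univ h.contDiff h.neg_lapl_nonneg]
    refine hM.trans_eq ?_
    rw [hβ]
    ring
  exact h.setIntegral_log_mul_le hs₀ (by linarith) (by linarith) (by linarith) (by linarith)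
    (by positivity) hMuniv fun x hx hxS ↦
      h.rpow_mul_exp_le hs₀ (by linarith) hR hRSL (by linarith) (hmass L hs₀L v h) hMuniv hx hxS

end IsBlowUpProfile

end LogMoment

section Rescaling

variable {E : Type*} [NormedAddCommGroup E] [NormedSpace ℝ E]

lemma exists_contDiff_eqOn_ball {F : Type*} [NormedAddCommGroup F] [NormedSpace ℝ F]
    [HasContDiffBump E] {n : ℕ∞} {v : E → F} {x : E} {R R' : ℝ} (hR : 0 < R) (hRR' : R < R')
    (hv : ContDiffOn ℝ n v (ball x R')) :
    ∃ w : E → F, ContDiff ℝ n w ∧ EqOn w v (ball x R) := by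
  let f : ContDiffBump x := ⟨R, (R + R') / 2, hR, by linarith⟩
  refine ⟨fun y ↦ f y • v y, contDiff_iff_contDiffAt.mpr fun y ↦ ?_, fun y hy ↦ ?_⟩
  · by_cases hy : y ∈ ball x R'
    · exact f.contDiff.contDiffAt.smul (hv.contDiffAt (isOpen_ball.mem_nhds hy))
    · have hout : y ∉ closedBall x f.rOut :=
        fun h ↦ hy (closedBall_subset_ball (by change (R + R') / 2 < R'; linarith) h)
      refine (contDiffAt_const (c := 0)).congr_of_eventuallyEq ?_
      filter_upwards [isClosed_closedBall.isOpen_compl.mem_nhds hout] with z hz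
      rw [f.zero_of_le_dist (not_le.mp (mem_closedBall.not.mp hz)).le, zero_smul]
  · simp only [f.one_of_mem_closedBall (ball_subset_closedBall hy), one_smul]

lemma setIntegral_ball_comp_add_smul {F : Type*} [NormedAddCommGroup F] [NormedSpace ℝ F]
    [FiniteDimensional ℝ E] [MeasurableSpace E] [BorelSpace E] (μ : Measure E) [μ.IsAddHaarMeasure]
    (f : E → F) (x : E) {r : ℝ} (hr : 0 < r) (L : ℝ) :
    ∫ z in ball 0 L, f (x + r • z) ∂μ
      = (r ^ Module.finrank ℝ E)⁻¹ • ∫ y in ball x (r * L), f y ∂μ := by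
  rw [Measure.setIntegral_comp_smul_of_pos μ (fun z ↦ f (x + z)) _ hr, _root_.smul_ball hr.ne',
    smul_zero, norm_of_nonneg hr.le, ← (measurePreserving_add_left μ x).setIntegral_preimage_emb
      (measurableEmbedding_addLeft x) f, preimage_add_ball, sub_self]

lemma ball_infDist_frontier_subset [FiniteDimensional ℝ E] {s : Set E} {x : E} (hx : x ∈ s) :
    ball x (infDist x (frontier s)) ⊆ s := by
  rcases eq_or_ne s univ with rfl | hs
  · exact subset_univ _
  obtain ⟨y, hy, hxy⟩ := exists_mem_frontier_infDist_compl_eq_dist hx hs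
  exact (ball_subset_ball ((infDist_le_dist_of_mem hy).trans_eq hxy.symm)).trans
    ball_infDist_compl_subset

lemma infDist_sphere_pos [Nontrivial E] {x y : E} {R : ℝ} (hx : x ∈ ball y R) :
    0 < infDist x (sphere y R) :=
  (isClosed_sphere.notMem_iff_infDist_pos
    (NormedSpace.sphere_nonempty.mpr (pos_of_mem_ball hx).le)).mp
    fun h ↦ (mem_ball.mp hx).ne (mem_sphere.mp h)

lemma lapl_comp_add_smul_sub_const {u : E2 → ℝ} {x θ : E2} {t : ℝ}
    (hu : ∀ᶠ y in 𝓝 (x + t • θ), ContDiffAt ℝ 2 u y) (a : ℝ) :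
    lapl (fun z ↦ u (x + t • z) - a) θ = t ^ 2 * lapl u (x + t • θ) := by
  have hline : Continuous fun z : E2 ↦ x + t • z := by fun_prop
  have hfirst : ∀ k, pd k (fun z ↦ u (x + t • z) - a) =ᶠ[𝓝 θ] fun z ↦ t * pd k u (x + t • z) := by
    intro k
    filter_upwards [hline.continuousAt.eventually hu] with z hz
    rw [← pd_comp_add_smul (hz.differentiableAt two_ne_zero), pd, pd, fderiv_sub_const]
  have hsecond : ∀ k, pd k (pd k fun z ↦ u (x + t • z) - a) θ
      = t ^ 2 * pd k (pd k u) (x + t • θ) := by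
    intro k
    have hd : DifferentiableAt ℝ (pd k u) (x + t • θ) := differentiableAt_pd hu.self_of_nhds k
    have hdcomp : DifferentiableAt ℝ (fun z ↦ pd k u (x + t • z)) θ :=
      hd.comp (f := fun z : E2 ↦ x + t • z) θ (by fun_prop)
    rw [(pd_eventuallyEq (hfirst k) k).eq_of_nhds, pd, fderiv_const_mul hdcomp]
    change t * pd k (fun z ↦ pd k u (x + t • z)) θ = _
    rw [pd_comp_add_smul hd]
    ring
  rw [lapl, lapl, hsecond, hsecond]
  ring

lemma setIntegral_exp_mono_set {X : Type*} [TopologicalSpace X] [MeasurableSpace X]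
    [OpensMeasurableSpace X] {μ : Measure X} {s t : Set X} {f : X → ℝ} {M : ℝ} (hst : s ⊆ t)
    (ht : MeasurableSet t) (hμt : μ t ≠ ⊤) (hf : ContinuousOn f t) (hM : ∀ x ∈ t, f x ≤ M) :
    ∫ x in s, exp (f x) ∂μ ≤ ∫ x in t, exp (f x) ∂μ := by
  have hint : IntegrableOn (fun x ↦ exp (f x)) t μ :=
    .of_bound hμt.lt_top (hf.rexp.aestronglyMeasurable ht) (exp M) <|
      ae_restrict_of_forall_mem ht fun x hx ↦ by simpa using hM x hx
  exact setIntegral_mono_set hint (.of_forall fun x ↦ (exp_pos _).le) hst.eventuallyLE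

variable {b C₀ δ r : ℝ} {u V : E2 → ℝ} {x : E2}

lemma sq_eq_exp_neg {a : ℝ} (hr : r = exp (-a / 2)) : r ^ 2 = exp (-a) := by
  rw [hr, ← exp_nat_mul]
  congr 1
  push_cast
  ring

lemma setIntegral_ball_mul_exp_sub (F : E2 → ℝ) (hr : r = exp (-(u x) / 2)) (L : ℝ) :
    ∫ θ in ball (0 : E2) L, F (x + r • θ) * exp (u (x + r • θ) - u x)
      = ∫ y in ball x (r * L), F y * exp (u y) := by
  have hr0 : 0 < r := hr ▸ exp_pos _
  simp only [sub_eq_add_neg, exp_add, ← sq_eq_exp_neg hr, ← mul_assoc]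
  rw [integral_mul_const, setIntegral_ball_comp_add_smul volume (fun y ↦ F y * exp (u y)) x hr0]
  simp only [finrank_euclideanSpace, Fintype.card_fin, smul_eq_mul]
  field_simp

lemma neg_lapl_rescale_eq (hu : ContDiffOn ℝ 2 u (ball x δ))
    (hpde : ∀ y ∈ ball x δ, -lapl u y = V y * exp (u y)) (hr : r = exp (-(u x) / 2)) {θ : E2}
    (hθ : x + r • θ ∈ ball x δ) :
    -lapl (fun z ↦ u (x + r • z) - u x) θ = V (x + r • θ) * exp (u (x + r • θ) - u x) := by
  have hcd : ∀ᶠ y in 𝓝 (x + r • θ), ContDiffAt ℝ 2 u y := by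
    filter_upwards [isOpen_ball.mem_nhds hθ] with y hy
    exact hu.contDiffAt (isOpen_ball.mem_nhds hy)
  rw [lapl_comp_add_smul_sub_const hcd, ← mul_neg, hpde _ hθ, sub_eq_add_neg, exp_add,
    ← sq_eq_exp_neg hr]
  ring

lemma exists_isBlowUpProfile (hδ : 0 < δ) (hu : ContDiffOn ℝ 2 u (ball x δ))
    (hV : ∀ y ∈ ball x δ, 0 ≤ V y ∧ V y ≤ b)
    (hpde : ∀ y ∈ ball x δ, -lapl u y = V y * exp (u y))
    (hint : ∫ y in ball x δ, exp (u y) ≤ C₀) (hmax : ∀ y ∈ ball x δ, u y ≤ u x)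
    (hr : r = exp (-(u x) / 2)) :
    ∃ w, IsBlowUpProfile b C₀ (δ / (2 * r)) w ∧
      (∀ θ ∈ ball 0 (δ / (2 * r)), -lapl w θ = V (x + r • θ) * exp (u (x + r • θ) - u x)) ∧
      ∫ θ in ball 0 (δ / (2 * r)), -lapl w θ = ∫ y in ball x (δ / 2), V y * exp (u y) := by
  have hr0 : 0 < r := hr ▸ exp_pos _
  have hrδ : r * (δ / (2 * r)) = δ / 2 := by field_simp
  have hmaps : MapsTo (fun θ : E2 ↦ x + r • θ) (ball 0 (δ / r)) (ball x δ) := by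
    intro θ hθ
    have hθ' : ‖θ‖ * r < δ := (lt_div_iff₀ hr0).mp (mem_ball_zero_iff.mp hθ)
    simpa [norm_smul, abs_of_pos hr0, mul_comm r] using hθ'
  have hlt : δ / (2 * r) < δ / r := div_lt_div_of_pos_left hδ hr0 (by linarith)
  have hL : 0 < δ / (2 * r) := by positivity
  have hmem : ∀ θ ∈ ball (0 : E2) (δ / (2 * r)), x + r • θ ∈ ball x δ :=
    fun θ hθ ↦ hmaps (ball_subset_ball hlt.le hθ)
  have hscaled : ContDiffOn ℝ 2 (fun θ ↦ u (x + r • θ) - u x) (ball 0 (δ / r)) :=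
    (hu.comp (contDiff_const.add (contDiff_id.const_smul r)).contDiffOn hmaps).sub contDiffOn_const
  obtain ⟨w, hw, hwv⟩ := exists_contDiff_eqOn_ball hL hlt hscaled
  have hlapl : ∀ θ ∈ ball 0 (δ / (2 * r)),
      -lapl w θ = V (x + r • θ) * exp (u (x + r • θ) - u x) := fun θ hθ ↦ by
    rw [lapl_congr (hwv.eventuallyEq_of_mem (isOpen_ball.mem_nhds hθ))]
    exact neg_lapl_rescale_eq hu hpde hr (hmem θ hθ)
  refine ⟨w, ⟨hw, ?_, fun θ hθ ↦ ?_, fun θ hθ ↦ ?_, fun θ hθ ↦ ?_, ?_⟩, hlapl, ?_⟩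
  · simp [hwv (mem_ball_self hL)]
  · rw [hwv hθ]
    exact sub_nonpos.mpr (hmax _ (hmem θ hθ))
  · rw [hlapl θ hθ]
    exact mul_nonneg (hV _ (hmem θ hθ)).1 (exp_pos _).le
  · rw [hlapl θ hθ, hwv hθ]
    exact mul_le_mul_of_nonneg_right (hV _ (hmem θ hθ)).2 (exp_pos _).le
  · have hcov := setIntegral_ball_mul_exp_sub (fun _ ↦ 1) hr (δ / (2 * r))
    simp only [one_mul, hrδ] at hcov
    rw [setIntegral_congr_fun measurableSet_ball fun θ hθ ↦ congrArg exp (hwv hθ), hcov]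
    exact (setIntegral_exp_mono_set (ball_subset_ball (by linarith)) measurableSet_ball
      measure_ball_lt_top.ne hu.continuousOn hmax).trans hint
  · rw [setIntegral_congr_fun measurableSet_ball hlapl, setIntegral_ball_mul_exp_sub V hr, hrδ]

end Rescaling

lemma exists_tendsto_atTop_of_eventually {P : ℕ → ℕ → Prop} (h0 : ∀ i, P 0 i)
    (h : ∀ k, ∀ᶠ i in atTop, P k i) : ∃ l : ℕ → ℕ, Tendsto l atTop atTop ∧ ∀ i, P (l i) i := by
  classical
  refine ⟨fun i ↦ Nat.findGreatest (P · i) i, tendsto_atTop.mpr fun k ↦ ?_,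
    fun i ↦ Nat.findGreatest_spec (P := (P · i)) (Nat.zero_le i) (h0 i)⟩
  filter_upwards [h k, eventually_ge_atTop k] with i hi hki
  exact Nat.le_findGreatest hki hi

theorem stmt10_general
    (b C₀ : ℝ) (V u : ℕ → E2 → ℝ) (x_ : ℕ → E2) (δ r : ℕ → ℝ) (v : ℕ → E2 → ℝ)
    (hδ : ∀ i, 0 < δ i)
    (hu : ∀ i, ContDiffOn ℝ 2 (u i) (ball (x_ i) (δ i)))
    (hVb : ∀ i, ∀ x ∈ ball (x_ i) (δ i), 0 ≤ V i x ∧ V i x ≤ b)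
    (hpde : ∀ i, ∀ x ∈ ball (x_ i) (δ i), -lapl (u i) x = V i x * exp (u i x))
    (hint : ∀ i, ∫ y in ball (x_ i) (δ i), exp (u i y) ≤ C₀)
    (hmax : ∀ i, ∀ y ∈ ball (x_ i) (δ i), u i y ≤ u i (x_ i))
    (hr : ∀ i, r i = exp (-(u i (x_ i)) / 2))
    (hrδ : Tendsto (fun i ↦ r i / δ i) atTop (𝓝 0))
    (hmass : ∀ ε > 0, ∀ᶠ i in atTop,
      ∫ y in ball (x_ i) (δ i / 2), V i y * exp (u i y) ≤ 8 * π + ε)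
    (hv : ∀ i θ, v i θ = u i (x_ i + r i • θ) - u i (x_ i)) :
    ∃ l : ℕ → ℝ, Tendsto l atTop atTop ∧ (∀ i, l i ≤ δ i / (2 * r i)) ∧
      ∃ C' : ℝ, ∀ i, ∫ θ in ball (0 : E2) (l i),
        1 / (2 * π) * log ‖θ‖ * (V i (x_ i + r i • θ) * exp (v i θ)) ≤ C' := by
  obtain ⟨C, ε, hε, hC⟩ := IsBlowUpProfile.exists_setIntegral_log_mul_le b C₀
  choose w hw hlapl hmassw using fun i ↦
    exists_isBlowUpProfile (hδ i) (hu i) (hVb i) (hpde i) (hint i) (hmax i) (hr i)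
  have hr0 : ∀ i, 0 < r i := fun i ↦ hr i ▸ exp_pos _
  have hL0 : ∀ i, 0 < δ i / (2 * r i) := fun i ↦ div_pos (hδ i) (mul_pos two_pos (hr0 i))
  have hL : Tendsto (fun i ↦ δ i / (2 * r i)) atTop atTop := by
    have hpos : Tendsto (fun i ↦ r i / δ i) atTop (𝓝[>] 0) :=
      tendsto_nhdsWithin_iff.mpr ⟨hrδ, .of_forall fun i ↦ div_pos (hr0 i) (hδ i)⟩
    refine (hpos.inv_tendsto_nhdsGT_zero.atTop_div_const two_pos).congr fun i ↦ ?_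
    simp only [Pi.inv_apply, inv_div, div_div, mul_comm]
  have hmoment : ∀ k : ℕ, ∀ᶠ i in atTop, k ≤ δ i / (2 * r i) ∧
      ∫ θ in ball (0 : E2) k, log ‖θ‖ * -lapl (w i) θ ≤ max C 0 := by
    intro k
    obtain ⟨L₀, hL₀⟩ := hC k
    filter_upwards [hL.eventually_ge_atTop k, hL.eventually_ge_atTop L₀, hmass ε hε]
      with i hki hi hmassi
    exact ⟨hki, (hL₀ _ hi _ (hw i) ((hmassw i).trans_le hmassi)).trans (le_max_left _ _)⟩
  obtain ⟨l, hl, hlP⟩ := exists_tendsto_atTop_of_eventually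
    (fun i ↦ by simpa using (hL0 i).le) hmoment
  refine ⟨fun i ↦ l i, tendsto_natCast_atTop_atTop.comp hl, fun i ↦ (hlP i).1,
    1 / (2 * π) * max C 0, fun i ↦ ?_⟩
  calc _ = ∫ θ in ball (0 : E2) (l i), 1 / (2 * π) * (log ‖θ‖ * -lapl (w i) θ) := by
        refine setIntegral_congr_fun measurableSet_ball fun θ hθ ↦ ?_
        simp only [hlapl i θ (ball_subset_ball (hlP i).1 hθ), hv, mul_assoc]
    _ ≤ _ := by
        rw [integral_const_mul]
        gcongr
        exact (hlP i).2

theorem stmt10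
    (b A s C₀ : ℝ) (hs1 : 1/2 < s) (hs2 : s ≤ 1)
    (V u : ℕ → E2 → ℝ) (x_ : ℕ → E2) (δ r : ℕ → ℝ) (v : ℕ → E2 → ℝ)
    (hu : ∀ i, ContDiffOn ℝ 2 (u i) (closedBall (0:E2) 1))
    (hVb : ∀ i, ∀ x ∈ ball (0:E2) 1, 0 ≤ V i x ∧ V i x ≤ b)
    (hVhol : ∀ i, ∀ x ∈ ball (0:E2) 1, ∀ y ∈ ball (0:E2) 1, |V i x - V i y| ≤ A * ‖x - y‖ ^ s)
    (hpde : ∀ i, ∀ x ∈ ball (0:E2) 1, -(lapl (u i) x) = V i x * Real.exp (u i x))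
    (hbc : ∀ i, ∀ x ∈ sphere (0:E2) 1, u i x = 0)
    (hint : ∀ i, (∫ y in ball (0:E2) 1, Real.exp (u i y)) ≤ C₀)
    (hxmem : ∀ i, x_ i ∈ ball (0:E2) 1)
    (hmax : ∀ i, ∀ y ∈ closedBall (0:E2) 1, u i y ≤ u i (x_ i))
    (hblow : Tendsto (fun i => u i (x_ i)) atTop atTop)
    (hδ : ∀ i, δ i = Metric.infDist (x_ i) (sphere (0:E2) 1))
    (hδ0 : Tendsto δ atTop (nhds 0))
    (hr : ∀ i, r i = Real.exp (-(u i (x_ i)) / 2))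
    (hrδ : Tendsto (fun i => r i / δ i) atTop (nhds 0))
    (hmass : Tendsto (fun i => ∫ y in ball (x_ i) (δ i / 2), V i y * Real.exp (u i y)) atTop
      (nhds (8 * Real.pi)))
    (hbound : ∀ ε : ℝ, 0 < ε → ε < 1 → ∃ Cε : ℝ, ∀ i, ∀ y : E2, ‖y‖ = ε →
      u i (x_ i + δ i • y) ≤ Cε)
    (hv : ∀ i θ, v i θ = u i (x_ i + r i • θ) - u i (x_ i)) :
    ∃ l : ℕ → ℝ, Tendsto l atTop atTop ∧ (∀ i, l i ≤ δ i / (2 * r i)) ∧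
      ∃ C' : ℝ, ∀ i, (∫ θ in ball (0:E2) (l i),
        (1 / (2 * Real.pi)) * Real.log ‖θ‖ * (V i (x_ i + r i • θ) * Real.exp (v i θ))) ≤ C' := by
  have hball : ∀ i, ball (x_ i) (δ i) ⊆ ball 0 1 := fun i ↦ by
    rw [hδ, ← frontier_ball 0 one_ne_zero]
    exact ball_infDist_frontier_subset (hxmem i)
  exact stmt10_general b C₀ V u x_ δ r v (fun i ↦ hδ i ▸ infDist_sphere_pos (hxmem i))
    (fun i ↦ (hu i).mono ((hball i).trans ball_subset_closedBall))
    (fun i x hx ↦ hVb i x (hball i hx)) (fun i x hx ↦ hpde i x (hball i hx))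
    (fun i ↦ (setIntegral_exp_mono_set (hball i) measurableSet_ball measure_ball_lt_top.ne
      ((hu i).continuousOn.mono ball_subset_closedBall)
      fun y hy ↦ hmax i y (ball_subset_closedBall hy)).trans (hint i))
    (fun i y hy ↦ hmax i y (ball_subset_closedBall (hball i hy))) hr hrδ
    (fun ε hε ↦ hmass.eventually_le_const (lt_add_of_pos_right _ hε)) hv
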